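/- arXiv:1903.08326 — 3 statements merged into one kernel-verified Lean document; each statement's English description precedes it below -/
import Mathlib

section
/- For every integer s ≥ 1 there exists a constant C > 0 (depending only on s) such that for every integer n > s and every subset S ⊆ {1,…,n} with |S| = n−s, writing g_1 < ⋯ < g_{n−s} for the elements of S, the (n−s)×(n−s) real matrix G with (i,j) entry T_{i−1}(ρ_{g_j}^{(n)}) is invertible and satisfies κ_F(G) ≤ C·(n−s)·√(n·s·(n−s))·(2n²)^{s−1}. -/
/-!
Write `x_1, …, x_n` for the Chebyshev points of degree `n`, `S` for the index set `{g_1, …, g_m}`,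
`m = n - s`, and `R` for its complement in `{1, …, n}`, so that `|R| = s`. Everything rests on the
discrete orthogonality of the Chebyshev polynomials `T_0, …, T_{n-1}` on the full set of points.

* Discrete Bessel inequality (`sum_sq_coeff_le`): if `p = ∑_{i<m} a_i T_i`, then
  `(n/2) ∑ a_i² ≤ ∑_k p(x_k)²`.
* `T_{n-1}` is orthogonal on the points to every polynomial of degree `< n - 1`
  (`sum_T_mul_eval_eq_zero`), and `1/n ≤ |T_{n-1}(x_k)| ≤ 1`, since `|T_{n-1}(x_k)| = sin θ_k`.
* If `p` has degree `< m` and vanishes at all points of `S` but `x_j`, then for `k ∈ R` the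
  polynomial `p ∏_{r ∈ R \ {k}} (X - x_r)` has degree `< n - 1` and vanishes at all points other
  than `x_j` and `x_k`. Orthogonality to `T_{n-1}` then compares its two remaining values. Since
  the points are at least `4/n²` apart and lie in `[-1, 1]`, this gives
  `|p(x_k)| ≤ n (n²/2)^{s-1} |p(x_j)|` (`abs_eval_le`).

A vector in the left kernel of `G` gives a `p` vanishing on `S`, hence at every `x_k`, hence zero by
the Bessel inequality, so `G` is invertible. The rows of `G⁻¹` are the Chebyshev coefficients of the
Lagrange basis on `S`, so the two estimates bound `‖G⁻¹‖_F² ≤ (2m/n)(1 + s n² (n²/2)^{2(s-1)})`.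
With `‖G‖_F ≤ m` this proves the bound with `C = 2`.
-/

open Polynomial

/-- The `i`-th Chebyshev point of degree `n`: `ρ_i^{(n)} = cos((2i-1)π/(2n))`. -/
noncomputable def chebPt (n i : ℕ) : ℝ :=
  Real.cos ((2 * (i : ℝ) - 1) * Real.pi / (2 * (n : ℝ)))

/-- The Frobenius norm of a real matrix. -/
noncomputable def frobNorm {α β : Type*} [Fintype α] [Fintype β]
    (A : Matrix α β ℝ) : ℝ :=
  Real.sqrt (∑ i, ∑ j, (A i j) ^ 2)

open Finset in
/-- Mathlib's Chebyshev–Gauss nodes are indexed from `0`, the points `chebPt n k` from `1`. -/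
theorem sum_chebPt_eq_sumZeroes (n : ℕ) (P : ℝ[X]) :
    Real.pi / n * ∑ k ∈ Icc 1 n, P.eval (chebPt n k) = Chebyshev.sumZeroes n P := by
  rw [Chebyshev.sumZeroes, Finset.sum_bij (fun k _ => k - 1)]
  · intro k hk
    simp only [mem_Icc, mem_range] at *
    omega
  · intro a ha b hb h
    simp only [mem_Icc] at *
    omega
  · intro b hb
    simp only [mem_range] at hb
    exact ⟨b + 1, by simp only [mem_Icc]; omega, by simp⟩
  · intro k hk
    obtain ⟨l, rfl⟩ : ∃ l, k = l + 1 := ⟨k - 1, by simp only [mem_Icc] at hk; omega⟩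
    simp only [chebPt, Nat.add_sub_cancel]
    congr 2
    push_cast
    ring

open Finset in
theorem sum_T_eq_zero {n : ℕ} (hn : n ≠ 0) {k : ℤ} (hk : ¬ (2 * n : ℤ) ∣ k) :
    ∑ i ∈ Icc 1 n, (Chebyshev.T ℝ k).eval (chebPt n i) = 0 := by
  have h := sum_chebPt_eq_sumZeroes n (Chebyshev.T ℝ k)
  rw [Chebyshev.sumZeroes_T_of_not_dvd hk] at h
  have h0 : Real.pi / n ≠ 0 := by positivity
  exact (mul_eq_zero.mp h).resolve_left h0

theorem T_mul_T_eval (i l : ℤ) (x : ℝ) :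
    (Chebyshev.T ℝ i).eval x * (Chebyshev.T ℝ l).eval x =
      ((Chebyshev.T ℝ (i + l)).eval x + (Chebyshev.T ℝ (i - l)).eval x) / 2 := by
  have h := congrArg (Polynomial.eval x) (Chebyshev.T_mul_T ℝ i l)
  simp only [eval_mul, eval_add, eval_ofNat] at h
  linarith

open Finset in
theorem sum_T_mul_T_of_ne {n i l : ℕ} (hi : i < n) (hl : l < n) (h : i ≠ l) :
    ∑ k ∈ Icc 1 n, (Chebyshev.T ℝ i).eval (chebPt n k) * (Chebyshev.T ℝ l).eval (chebPt n k)
      = 0 := by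
  simp only [T_mul_T_eval]
  rw [← Finset.sum_div, Finset.sum_add_distrib, sum_T_eq_zero (by omega),
    sum_T_eq_zero (by omega)]
  · simp
  · rintro ⟨c, hc⟩
    rcases lt_trichotomy c 0 with h0 | rfl | h0
    · nlinarith
    · omega
    · nlinarith
  · rintro ⟨c, hc⟩
    rcases lt_trichotomy c 0 with h0 | rfl | h0
    · nlinarith
    · omega
    · nlinarith

open Finset in
theorem le_sum_T_mul_self {n i : ℕ} (hi : i < n) :
    (n : ℝ) / 2 ≤
      ∑ k ∈ Icc 1 n, (Chebyshev.T ℝ i).eval (chebPt n k) * (Chebyshev.T ℝ i).eval (chebPt n k) := by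
  rcases Nat.eq_zero_or_pos i with rfl | h
  · simp
  · simp only [T_mul_T_eval]
    rw [← Finset.sum_div, Finset.sum_add_distrib, sum_T_eq_zero (by omega)]
    · simp
    · rintro ⟨c, hc⟩
      rcases lt_trichotomy c 0 with h0 | rfl | h0
      · nlinarith
      · omega
      · nlinarith

open Finset in
/-- Discrete Bessel inequality for Chebyshev expansions of length at most `n`. The constant is
`n / 2` although the squared norm of `T_0` is `n`. -/
theorem sum_sq_coeff_le {n m : ℕ} (hm : m ≤ n) (a : Fin m → ℝ) :
    (n : ℝ) / 2 * ∑ i, a i ^ 2 ≤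
      ∑ k ∈ Icc 1 n, (∑ i, a i * (Chebyshev.T ℝ (i : ℕ)).eval (chebPt n k)) ^ 2 := by
  have key : ∑ k ∈ Icc 1 n, (∑ i, a i * (Chebyshev.T ℝ (i : ℕ)).eval (chebPt n k)) ^ 2
      = ∑ i, a i ^ 2 * ∑ k ∈ Icc 1 n, (Chebyshev.T ℝ (i : ℕ)).eval (chebPt n k) *
          (Chebyshev.T ℝ (i : ℕ)).eval (chebPt n k) := by
    simp only [sq, Finset.sum_mul_sum]
    rw [Finset.sum_comm]
    refine Finset.sum_congr rfl fun i _ => ?_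
    rw [Finset.sum_comm, Finset.sum_eq_single i]
    · rw [Finset.mul_sum]
      exact Finset.sum_congr rfl fun k _ => by ring
    · intro l _ hl
      have h := sum_T_mul_T_of_ne (i.2.trans_le hm) (l.2.trans_le hm)
        (fun h => hl (Fin.ext h.symm))
      calc _ = a i * a l * ∑ k ∈ Icc 1 n, (Chebyshev.T ℝ (i : ℕ)).eval (chebPt n k) *
          (Chebyshev.T ℝ (l : ℕ)).eval (chebPt n k) := by
            rw [Finset.mul_sum]
            exact Finset.sum_congr rfl fun k _ => by ring
        _ = 0 := by rw [h, mul_zero]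
    · simp
  rw [key, Finset.mul_sum]
  refine Finset.sum_le_sum fun i _ => ?_
  rw [mul_comm]
  exact mul_le_mul_of_nonneg_left (le_sum_T_mul_self (i.2.trans_le hm)) (sq_nonneg _)

open Finset in
theorem sum_T_mul_eval_eq_zero {n : ℕ} (q : ℝ[X]) (hq : q.degree < (n - 1 : ℕ)) :
    ∑ k ∈ Icc 1 n, (Chebyshev.T ℝ (n - 1 : ℕ)).eval (chebPt n k) * q.eval (chebPt n k) = 0 := by
  have hmem : q ∈ degreeLT ℝ (n - 1) := by rwa [mem_degreeLT]
  rw [← Sequence.span_degreeLT (Chebyshev.chebyshevTsequence ℝ) (by simp)] at hmem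
  clear hq
  induction hmem using Submodule.span_induction with
  | mem x hx =>
    obtain ⟨i, hi, rfl⟩ := hx
    simp only [Set.mem_Iio] at hi
    exact sum_T_mul_T_of_ne (i := n - 1) (l := i) (by omega) (by omega) (by omega)
  | zero => simp
  | add x y _ _ hx hy => simp only [eval_add, mul_add, Finset.sum_add_distrib, hx, hy, add_zero]
  | smul c x _ hx => simp only [eval_smul, smul_eq_mul, mul_left_comm _ c, ← Finset.mul_sum, hx, mul_zero]

/-- Jordan's inequality in the parametrization of the Chebyshev angles, applied on both sides of
`π / 2`. -/
theorem le_sin {n : ℕ} (hn : n ≠ 0) {t u : ℝ} (h0 : 0 ≤ t) (h1 : t ≤ u) (h2 : u ≤ 2 * n - t) :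
    t / n ≤ Real.sin (u * Real.pi / (2 * n)) := by
  have hn' : (0 : ℝ) < n := by positivity
  have aux : ∀ v : ℝ, t ≤ v → v ≤ n → t / n ≤ Real.sin (v * Real.pi / (2 * n)) := by
    intro v hv hv'
    refine le_trans ?_ (Real.mul_le_sin (by have := h0.trans hv; positivity) ?_)
    · rw [show 2 / Real.pi * (v * Real.pi / (2 * n)) = v / n by field_simp]
      gcongr
    · rw [div_le_div_iff₀ (by positivity) (by positivity)]
      nlinarith [Real.pi_pos]
  rcases le_total u n with h | h
  · exact aux u h1 h
  · rw [← Real.sin_pi_sub, show Real.pi - u * Real.pi / (2 * n) = (2 * n - u) * Real.pi / (2 * n) by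
      field_simp]
    exact aux _ (by linarith) (by linarith)

theorem abs_chebPt_le (n k : ℕ) : |chebPt n k| ≤ 1 := Real.abs_cos_le_one _

theorem le_abs_chebPt_sub {n i k : ℕ} (hi : i ∈ Finset.Icc 1 n) (hk : k ∈ Finset.Icc 1 n)
    (hik : i ≠ k) : 4 / (n : ℝ) ^ 2 ≤ |chebPt n i - chebPt n k| := by
  wlog h : k < i generalizing i k
  · rw [abs_sub_comm]
    exact this hk hi hik.symm (by omega)
  simp only [Finset.mem_Icc] at hi hk
  have hn : n ≠ 0 := by omega
  have hn' : (0 : ℝ) < n := by positivity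
  have e1 : (1 : ℝ) ≤ k := by exact_mod_cast hk.1
  have e2 : (k : ℝ) + 1 ≤ i := by exact_mod_cast h
  have e3 : (i : ℝ) ≤ n := by exact_mod_cast hi.2
  have s1 := le_sin hn (t := 2) (u := i + k - 1) (by norm_num) (by linarith) (by linarith)
  have s2 := le_sin hn (t := 1) (u := i - k) (by norm_num) (by linarith) (by linarith)
  have hsub : chebPt n i - chebPt n k = -2 * Real.sin ((i + k - 1) * Real.pi / (2 * n)) *
      Real.sin ((i - k) * Real.pi / (2 * n)) := by
    rw [chebPt, chebPt, Real.cos_sub_cos]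
    congr 2
    · refine congrArg Real.sin ?_
      ring
    · ring
  have p1 : (0 : ℝ) < 2 / n := by positivity
  have p2 : (0 : ℝ) < 1 / n := by positivity
  rw [hsub, abs_mul, abs_mul, abs_of_pos (p1.trans_le s1), abs_of_pos (p2.trans_le s2),
    show |(-2 : ℝ)| = 2 by norm_num]
  calc 4 / (n : ℝ) ^ 2 = 2 * (2 / n) * (1 / n) := by field_simp; norm_num
    _ ≤ _ := mul_le_mul (mul_le_mul_of_nonneg_left s1 zero_le_two) s2 p2.le
      (mul_nonneg zero_le_two (p1.trans_le s1).le)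

/-- At a Chebyshev point `cos θ` of degree `n` one has `|T_{n-1}(cos θ)| = sin θ`, because
`cos (n θ) = 0`. -/
theorem le_abs_T_eval {n k : ℕ} (hk : k ∈ Finset.Icc 1 n) :
    1 / (n : ℝ) ≤ |(Chebyshev.T ℝ (n - 1 : ℕ)).eval (chebPt n k)| := by
  simp only [Finset.mem_Icc] at hk
  have hn : n ≠ 0 := by omega
  have e1 : (1 : ℝ) ≤ k := by exact_mod_cast hk.1
  have e3 : (k : ℝ) ≤ n := by exact_mod_cast hk.2
  have s1 := le_sin hn (t := 1) (u := 2 * k - 1) (by norm_num) (by linarith) (by linarith)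
  refine s1.trans (le_trans (le_abs_self _) ?_)
  rw [chebPt, Chebyshev.T_real_cos]
  set θ := (2 * (k : ℝ) - 1) * Real.pi / (2 * n) with hθ
  have hc : Real.cos (n * θ) = 0 := by
    rw [Real.cos_eq_zero_iff]
    -- `n θ = (2 (k - 1) + 1) π / 2`
    refine ⟨k - 1, ?_⟩
    rw [hθ]
    push_cast
    field_simp
    ring
  have hs : Real.sin (n * θ) ^ 2 = 1 := by
    have := Real.sin_sq_add_cos_sq (n * θ)
    rw [hc] at this
    linarith
  rw [← sq_le_sq]
  have : (((n - 1 : ℕ) : ℤ) : ℝ) * θ = n * θ - θ := by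
    rw [Int.cast_natCast, Nat.cast_sub (by omega)]
    push_cast
    ring
  rw [this, Real.cos_sub, hc, zero_mul, zero_add, mul_pow, hs, one_mul]

open Finset in
/-- A polynomial of degree `< |S|` vanishing at all points indexed by `S` except possibly the
`j`-th is controlled, at the points outside `S`, by its value at the `j`-th point. -/
theorem abs_eval_le {n : ℕ} {S : Finset ℕ} (hS : S ⊆ Icc 1 n) {j k : ℕ} (hj : j ∈ S)
    (hk : k ∈ Icc 1 n \ S) (p : ℝ[X]) (hp : p.degree < #S)
    (h0 : ∀ i ∈ S, i ≠ j → p.eval (chebPt n i) = 0) :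
    |p.eval (chebPt n k)| ≤
      n * ((n : ℝ) ^ 2 / 2) ^ (#(Icc 1 n \ S) - 1) * |p.eval (chebPt n j)| := by
  have hkn : k ∈ Icc 1 n := (mem_sdiff.mp hk).1
  have hkS : k ∉ S := (mem_sdiff.mp hk).2
  have hjk : j ≠ k := fun h => hkS (h ▸ hj)
  have hn : n ≠ 0 := by simp only [mem_Icc] at hkn; omega
  have hn' : (0 : ℝ) < n := by positivity
  set R := (Icc 1 n \ S).erase k with hR
  have hRc : #R = #(Icc 1 n \ S) - 1 := card_erase_of_mem hk
  have hcard : #(Icc 1 n \ S) + #S = n := by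
    rw [card_sdiff_add_card_eq_card hS, Nat.card_Icc, Nat.add_sub_cancel]
  have hpos : 0 < #(Icc 1 n \ S) := card_pos.mpr ⟨k, hk⟩
  rw [← hRc]
  set w : ℝ[X] := ∏ r ∈ R, (X - C (chebPt n r)) with hw
  have hwe : ∀ x, w.eval x = ∏ r ∈ R, (x - chebPt n r) := fun x => by
    simp [hw, eval_prod]
  have hdw : w.degree = #R := by
    rw [hw, degree_prod]
    simp
  have hdeg : (p * w).degree < (n - 1 : ℕ) := by
    rw [degree_mul, hdw]
    rcases eq_or_ne p 0 with rfl | hp0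
    · simp
    · rw [degree_eq_natDegree hp0] at hp ⊢
      norm_cast at hp ⊢
      omega
  have hsum := sum_T_mul_eval_eq_zero (n := n) (p * w) hdeg
  have hjn := hS hj
  rw [← Finset.add_sum_erase _ _ hjn, ← Finset.add_sum_erase _ _
    (mem_erase.mpr ⟨hjk.symm, hkn⟩), Finset.sum_eq_zero, add_zero] at hsum
  swap
  · intro i hi
    simp only [mem_erase] at hi
    rw [eval_mul]
    by_cases hiS : i ∈ S
    · rw [h0 i hiS hi.2.1]; ring
    · rw [hwe, Finset.prod_eq_zero (i := i)]
      · ring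
      · exact mem_erase.mpr ⟨hi.1, mem_sdiff.mpr ⟨hi.2.2, hiS⟩⟩
      · ring
  have habs : |(Chebyshev.T ℝ (n - 1 : ℕ)).eval (chebPt n k)| * (|p.eval (chebPt n k)| *
        |w.eval (chebPt n k)|) =
      |(Chebyshev.T ℝ (n - 1 : ℕ)).eval (chebPt n j)| * (|p.eval (chebPt n j)| *
        |w.eval (chebPt n j)|) := by
    rw [← abs_mul, ← abs_mul, ← abs_mul, ← abs_mul, ← eval_mul (x := chebPt n k) (p := p),
      ← eval_mul (x := chebPt n j) (p := p), ← abs_neg,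
      eq_neg_of_add_eq_zero_left hsum, abs_neg]
  have b1 := le_abs_T_eval hkn
  have b2 := Chebyshev.abs_eval_T_real_le_one (n - 1 : ℕ) (abs_chebPt_le n j)
  have b3 : |w.eval (chebPt n j)| ≤ 2 ^ #R := by
    rw [hwe, abs_prod]
    refine (Finset.prod_le_prod (fun _ _ => abs_nonneg _) (g := fun _ => 2) fun r _ => ?_).trans
      (by simp)
    exact (abs_sub _ _).trans (by linarith [abs_chebPt_le n j, abs_chebPt_le n r])
  have b4 : (4 / (n : ℝ) ^ 2) ^ #R ≤ |w.eval (chebPt n k)| := by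
    rw [hwe, abs_prod, ← Finset.prod_const]
    refine Finset.prod_le_prod (fun _ _ => by positivity) fun r hr => ?_
    simp only [hR, mem_erase, mem_sdiff] at hr
    exact le_abs_chebPt_sub hkn hr.2.1 (Ne.symm hr.1)
  have hmain : 1 / (n : ℝ) * (|p.eval (chebPt n k)| * (4 / (n : ℝ) ^ 2) ^ #R) ≤
      1 * (|p.eval (chebPt n j)| * 2 ^ #R) := by
    calc _ ≤ _ := by gcongr
      _ = _ := habs
      _ ≤ _ := by gcongr
  have e : (4 / (n : ℝ) ^ 2) ^ #R * ((n : ℝ) ^ 2 / 2) ^ #R = 2 ^ #R := by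
    rw [← mul_pow]
    congr 1
    field_simp
    norm_num
  have hq : 0 < (4 / (n : ℝ) ^ 2) ^ #R := by positivity
  refine le_of_mul_le_mul_right ?_ hq
  rw [one_mul, ← e] at hmain
  calc _ = n * (1 / (n : ℝ) * (|p.eval (chebPt n k)| * (4 / (n : ℝ) ^ 2) ^ #R)) := by field_simp
    _ ≤ _ := mul_le_mul_of_nonneg_left hmain hn'.le
    _ = _ := by ring

open Finset in
/-- Squared norm bound for the coefficients of a Chebyshev expansion of length `m = n - s` whose
values at the points indexed by `g` vanish except possibly at the `j`-th. -/
theorem sum_sq_le_of_vanish {s n : ℕ} (hsn : s < n) {g : Fin (n - s) → ℕ}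
    (hg : StrictMono g) (hgn : ∀ j, g j ∈ Icc 1 n) (j : Fin (n - s)) (a : Fin (n - s) → ℝ)
    (h0 : ∀ l, l ≠ j → ∑ i, a i * (Chebyshev.T ℝ (i : ℕ)).eval (chebPt n (g l)) = 0) :
    (n : ℝ) / 2 * ∑ i, a i ^ 2 ≤ (1 + s * (n * ((n : ℝ) ^ 2 / 2) ^ (s - 1)) ^ 2) *
      (∑ i, a i * (Chebyshev.T ℝ (i : ℕ)).eval (chebPt n (g j))) ^ 2 := by
  set p : ℝ[X] := ∑ i, C (a i) * Chebyshev.T ℝ (i : ℕ) with hpdef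
  have hpe : ∀ x, ∑ i, a i * (Chebyshev.T ℝ (i : ℕ)).eval x = p.eval x := fun x => by
    simp [hpdef, eval_finsetSum]
  refine (sum_sq_coeff_le (Nat.sub_le n s) a).trans ?_
  simp only [hpe] at h0 ⊢
  set S : Finset ℕ := univ.image g with hSdef
  have hS : S ⊆ Icc 1 n := by
    intro x hx
    obtain ⟨l, _, rfl⟩ := mem_image.mp hx
    exact hgn l
  have hSc : #S = n - s := by
    rw [hSdef, card_image_of_injective _ hg.injective, card_univ, Fintype.card_fin]
  have hRc : #(Icc 1 n \ S) = s := by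
    rw [card_sdiff_of_subset hS, Nat.card_Icc, hSc]
    omega
  have hdeg : p.degree < #S := by
    rw [hSc, hpdef, ← mem_degreeLT]
    refine Submodule.sum_mem _ fun i _ => ?_
    rw [mem_degreeLT, ← smul_eq_C_mul]
    refine (degree_smul_le _ _).trans_lt ?_
    rw [Chebyshev.degree_T]
    simp
  have hjS : g j ∈ S := mem_image_of_mem _ (mem_univ _)
  rw [← Finset.sum_sdiff hS, add_comm, add_mul]
  refine add_le_add ?_ ?_
  · rw [Finset.sum_eq_single_of_mem _ hjS, one_mul]
    intro x hx hxj
    obtain ⟨l, _, rfl⟩ := mem_image.mp hx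
    rw [h0 l (fun h => hxj (h ▸ rfl))]
    simp
  · rw [mul_assoc, ← nsmul_eq_mul]
    conv_rhs => enter [1]; rw [← hRc]
    refine Finset.sum_le_card_nsmul (Icc 1 n \ S) _ _ fun k hk => ?_
    have h := abs_eval_le hS hjS hk p hdeg (by
      intro x hx hxj
      obtain ⟨l, _, rfl⟩ := mem_image.mp hx
      exact h0 l (fun h => hxj (h ▸ rfl)))
    rw [hRc] at h
    rw [← sq_abs, ← sq_abs (eval (chebPt n (g j)) p), ← mul_pow]
    exact pow_le_pow_left₀ (abs_nonneg _) h 2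

/-- For every `s ≥ 1` there is a constant `C > 0` such that for every `n > s` and every
subset of `{1,…,n}` of size `n - s`, enumerated by a strictly increasing `g`, the
`(n-s) × (n-s)` Chebyshev-Vandermonde matrix `G` with entries `T_{i-1}(ρ_{g j}^{(n)})`
is invertible and its Frobenius condition number is at most
`C (n-s) √(n s (n-s)) (2 n²)^{s-1}`. -/
theorem stmt_0 (s : ℕ) (hs : 1 ≤ s) :
    ∃ C : ℝ, 0 < C ∧
      ∀ n : ℕ, s < n →
        ∀ g : Fin (n - s) → ℕ, StrictMono g →
          (∀ j, g j ∈ Finset.Icc 1 n) →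
            ∀ G : Matrix (Fin (n - s)) (Fin (n - s)) ℝ,
              (∀ i j, G i j = (Polynomial.Chebyshev.T ℝ (i : ℕ)).eval (chebPt n (g j))) →
                IsUnit G.det ∧
                  frobNorm G * frobNorm G⁻¹ ≤
                    C * ((n : ℝ) - s) * Real.sqrt ((n : ℝ) * s * ((n : ℝ) - s)) *
                      (2 * (n : ℝ) ^ 2) ^ (s - 1) := by
  refine ⟨2, by norm_num, fun n hsn g hg hgn G hG => ?_⟩
  have hn' : (0 : ℝ) < n := by exact_mod_cast (by omega : 0 < n)
  have hs' : (1 : ℝ) ≤ s := by exact_mod_cast hs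
  have hn1 : (1 : ℝ) ≤ n := by exact_mod_cast (by omega : 1 ≤ n)
  have hm : ((n - s : ℕ) : ℝ) = n - s := Nat.cast_sub hsn.le
  have hm0 : (0 : ℝ) ≤ n - s := hm ▸ Nat.cast_nonneg _
  have hdet : IsUnit G.det := by
    rw [isUnit_iff_ne_zero]
    intro hdet
    obtain ⟨a, ha, hv⟩ := Matrix.exists_vecMul_eq_zero_iff.mpr hdet
    have hv' : ∀ l, ∑ i, a i * (Chebyshev.T ℝ (i : ℕ)).eval (chebPt n (g l)) = 0 := fun l => by
      simpa [Matrix.vecMul, dotProduct, hG] using congrFun hv l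
    have h := sum_sq_le_of_vanish hsn hg hgn ⟨0, by omega⟩ a (fun l _ => hv' l)
    rw [hv'] at h
    have h0 : ∑ i, a i ^ 2 ≤ 0 := by
      by_contra! hc
      have : 0 < (n : ℝ) / 2 * ∑ i, a i ^ 2 := by positivity
      simp only [ne_eq, OfNat.ofNat_ne_zero, not_false_eq_true, zero_pow, mul_zero] at h
      linarith
    have h1 := (Finset.sum_eq_zero_iff_of_nonneg (fun i _ => sq_nonneg (a i))).mp
      (le_antisymm h0 (Finset.sum_nonneg fun i _ => sq_nonneg (a i)))
    exact ha (funext fun i => by simpa using h1 i (Finset.mem_univ i))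
  refine ⟨hdet, ?_⟩
  have hF : frobNorm G ≤ n - s := by
    rw [frobNorm]
    refine Real.sqrt_le_iff.mpr ⟨hm0, ?_⟩
    calc ∑ i, ∑ j, G i j ^ 2 ≤ ∑ _i : Fin (n - s), ∑ _j : Fin (n - s), (1 : ℝ) := by
          gcongr with i _ j _
          rw [hG, ← sq_abs]
          exact pow_le_one₀ (abs_nonneg _)
            (Chebyshev.abs_eval_T_real_le_one _ (abs_chebPt_le n (g j)))
      _ = _ := by simp only [Finset.sum_const, Finset.card_univ, Fintype.card_fin, nsmul_eq_mul, hm, mul_one, sq]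
  have hI : frobNorm G⁻¹ ≤ 2 * Real.sqrt ((n : ℝ) * s * ((n : ℝ) - s)) *
      (2 * (n : ℝ) ^ 2) ^ (s - 1) := by
    rw [frobNorm]
    refine Real.sqrt_le_iff.mpr ⟨by positivity, ?_⟩
    have hrow : ∀ j, ∑ i, G⁻¹ j i ^ 2 ≤ 4 * (n * s * ((2 * (n : ℝ) ^ 2) ^ (s - 1)) ^ 2) := by
      intro j
      have hv : ∀ l, ∑ i, G⁻¹ j i * (Chebyshev.T ℝ (i : ℕ)).eval (chebPt n (g l)) =
          (1 : Matrix _ _ ℝ) j l := fun l => by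
        rw [← Matrix.nonsing_inv_mul G hdet, Matrix.mul_apply]
        simp only [hG]
      have h := sum_sq_le_of_vanish hsn hg hgn j (G⁻¹ j)
        (fun l hl => by rw [hv, Matrix.one_apply_ne hl.symm])
      rw [hv, Matrix.one_apply_eq, one_pow, mul_one] at h
      set B := (2 * (n : ℝ) ^ 2) ^ (s - 1) with hB
      have hB1 : 1 ≤ B := one_le_pow₀ (by nlinarith)
      have hAB : ((n : ℝ) ^ 2 / 2) ^ (s - 1) ≤ B :=
        pow_le_pow_left₀ (by positivity) (by nlinarith) _
      have h2 : 1 + s * (n * ((n : ℝ) ^ 2 / 2) ^ (s - 1)) ^ 2 ≤ 2 * (s * (n * B) ^ 2) := by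
        have e1 : s * (n * ((n : ℝ) ^ 2 / 2) ^ (s - 1)) ^ 2 ≤ s * (n * B) ^ 2 := by gcongr
        have e2 : 1 ≤ s * (n * B) ^ 2 :=
          one_le_mul_of_one_le_of_one_le hs'
            (one_le_pow₀ (one_le_mul_of_one_le_of_one_le hn1 hB1))
        linarith
      refine le_of_mul_le_mul_left ((h.trans h2).trans_eq ?_) (half_pos hn')
      ring
    refine (Finset.sum_le_sum fun j _ => hrow j).trans_eq ?_
    rw [Finset.sum_const, Finset.card_univ, Fintype.card_fin, nsmul_eq_mul, hm, mul_pow (2 * _),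
      mul_pow 2 (Real.sqrt _), Real.sq_sqrt (by positivity)]
    ring
  calc frobNorm G * frobNorm G⁻¹ ≤ ((n : ℝ) - s) * (2 * Real.sqrt ((n : ℝ) * s * ((n : ℝ) - s)) *
      (2 * (n : ℝ) ^ 2) ^ (s - 1)) := mul_le_mul hF hI (Real.sqrt_nonneg _) hm0
    _ = _ := by ring
end

section
/- Let n ≥ 2 and 1 ≤ s ≤ n−1, let S ⊆ {1,…,n} with |S| = n−s and elements g_1 < ⋯ < g_{n−s}, and let G be the (n−s)×(n−s) real matrix with (i,j) entry T_{i−1}(ρ_{g_j}^{(n)}). Then G is invertible and ‖G⁻¹‖_F² ≤ (2(n−s)/n) · ( 1 + s·4^{s−1} / ( sin²(π/(2n)) · (cos(π/(2n)) − cos(3π/(2n)))^{2(s−1)} ) ). -/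
/-!
Row `j` of `G⁻¹` lists the Chebyshev coefficients of the polynomial `P_j` of degree `< n - s` with
`P_j(ρ_{g k}) = δ_{jk}`. Chebyshev–Gauss quadrature makes `T_0, …, T_{n-1}` orthogonal for the sum
over the `n` Chebyshev points, with squared norms at least `n / 2`. Hence the sum of the squared
coefficients of `P_j` is at most `(2 / n) ∑_k P_j(ρ_k)²` (`sum_sq_le`), and the same inequality
shows that the rows of `G` are linearly independent.

The points `ρ_{g k}` contribute exactly `1` to `∑_k P_j(ρ_k)²`. For an omitted index `k ∈ D`, let
`Q` be the product of `P_j` with all `X - ρ_i`, `i ∈ D \ {k}`. Then `deg Q < n - 1`, so `Q` is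
orthogonal to `T_{n-1}`; since `Q` vanishes at every Chebyshev point other than `ρ_{g j}` and
`ρ_k`, this reads `T_{n-1}(ρ_{g j}) Q(ρ_{g j}) + T_{n-1}(ρ_k) Q(ρ_k) = 0`. As `|T_{n-1}|` equals
`sin θ` at a Chebyshev point `cos θ`, and the Chebyshev points lie in `[-1, 1]` at distances at
least `cos(π/(2n)) - cos(3π/(2n))`, a bound on `|P_j(ρ_k)|` follows (`abs_eval_le`).
-/

open Polynomial

/-- The angle `θ` with `chebPt n k = cos θ`. -/
noncomputable def chebAngle (n k : ℕ) : ℝ := (2 * (k : ℝ) - 1) * Real.pi / (2 * (n : ℝ))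

lemma chebPt_eq (n k : ℕ) : chebPt n k = Real.cos (chebAngle n k) := rfl

/-- Chebyshev–Gauss quadrature, with the nodes indexed from `1` to `n`. -/
lemma sum_chebPt {n : ℕ} (hn : n ≠ 0) {P : ℝ[X]} (hP : P.degree < 2 * n) :
    ∑ k ∈ Finset.Icc 1 n, P.eval (chebPt n k) =
      n / Real.pi * ∫ x, P.eval x ∂Polynomial.Chebyshev.measureT := by
  have hn' : (n : ℝ) ≠ 0 := Nat.cast_ne_zero.mpr hn
  have hpi := Real.pi_ne_zero
  rw [Polynomial.Chebyshev.integral_eq_sumZeroes hn hP, Polynomial.Chebyshev.sumZeroes,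
    ← mul_assoc, show (n : ℝ) / Real.pi * (Real.pi / n) = 1 by field_simp, one_mul,
    ← Finset.Ico_add_one_right_eq_Icc, Finset.sum_Ico_eq_sum_range]
  refine Finset.sum_congr (by simp) fun k _ => ?_
  rw [chebPt]
  congr 2
  push_cast
  field_simp
  ring

lemma degree_T_mul_T_lt {n a b : ℕ} (ha : a < n) (hb : b < n) :
    (Polynomial.Chebyshev.T ℝ a * Polynomial.Chebyshev.T ℝ b).degree < 2 * n := by
  rw [degree_mul, Polynomial.Chebyshev.degree_T, Polynomial.Chebyshev.degree_T]
  norm_cast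
  omega

lemma sum_T_mul_T_of_ne_s1 {n a b : ℕ} (ha : a < n) (hb : b < n) (hab : a ≠ b) :
    ∑ k ∈ Finset.Icc 1 n, (Polynomial.Chebyshev.T ℝ a).eval (chebPt n k) *
      (Polynomial.Chebyshev.T ℝ b).eval (chebPt n k) = 0 := by
  have h := sum_chebPt (by omega) (degree_T_mul_T_lt ha hb)
  simp only [eval_mul] at h
  rw [h, Polynomial.Chebyshev.integral_eval_T_real_mul_eval_T_real_measureT_of_ne hab, mul_zero]

lemma le_sum_T_mul_T_self {n a : ℕ} (ha : a < n) :
    (n : ℝ) / 2 ≤ ∑ k ∈ Finset.Icc 1 n, (Polynomial.Chebyshev.T ℝ a).eval (chebPt n k) *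
      (Polynomial.Chebyshev.T ℝ a).eval (chebPt n k) := by
  have h := sum_chebPt (by omega) (degree_T_mul_T_lt ha ha)
  simp only [eval_mul] at h
  have hpi := Real.pi_ne_zero
  have hn : (0 : ℝ) ≤ n := Nat.cast_nonneg n
  rw [h]
  rcases eq_or_ne a 0 with rfl | h0
  · rw [Nat.cast_zero, Polynomial.Chebyshev.integral_eval_T_real_mul_self_measureT_zero]
    field_simp
    linarith
  · rw [Polynomial.Chebyshev.integral_T_real_mul_self_measureT_of_ne_zero h0]
    apply le_of_eq
    field_simp

/-- The discrete Bessel-type inequality: the squared length of a vector of Chebyshev coefficients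
is controlled by the values at all `n` Chebyshev points. -/
lemma sum_sq_le {n m : ℕ} (hm : m ≤ n) (hn : n ≠ 0) (v : Fin m → ℝ) :
    ∑ i, v i ^ 2 ≤ 2 / n * ∑ k ∈ Finset.Icc 1 n,
      (∑ i : Fin m, v i * (Polynomial.Chebyshev.T ℝ (i : ℕ)).eval (chebPt n k)) ^ 2 := by
  have hn' : (0 : ℝ) < n := by positivity
  have key : ∑ k ∈ Finset.Icc 1 n,
      (∑ i : Fin m, v i * (Polynomial.Chebyshev.T ℝ (i : ℕ)).eval (chebPt n k)) ^ 2 =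
      ∑ i : Fin m, v i ^ 2 * ∑ k ∈ Finset.Icc 1 n,
        (Polynomial.Chebyshev.T ℝ (i : ℕ)).eval (chebPt n k) *
        (Polynomial.Chebyshev.T ℝ (i : ℕ)).eval (chebPt n k) := by
    simp_rw [sq (∑ i : Fin m, _), Finset.sum_mul_sum]
    rw [Finset.sum_comm]
    refine Finset.sum_congr rfl fun i _ => ?_
    rw [Finset.sum_comm, Finset.sum_eq_single i]
    · rw [Finset.mul_sum]
      exact Finset.sum_congr rfl fun k _ => by ring
    · intro j _ hj
      have := sum_T_mul_T_of_ne_s1 (n := n) (a := i) (b := j) (by omega) (by omega)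
        (fun h => hj (Fin.ext h.symm))
      calc _ = v i * v j * ∑ k ∈ Finset.Icc 1 n,
            (Polynomial.Chebyshev.T ℝ (i : ℕ)).eval (chebPt n k) *
            (Polynomial.Chebyshev.T ℝ (j : ℕ)).eval (chebPt n k) := by
            rw [Finset.mul_sum]
            exact Finset.sum_congr rfl fun k _ => by ring
        _ = 0 := by rw [this, mul_zero]
    · simp
  rw [key, Finset.mul_sum]
  refine Finset.sum_le_sum fun i _ => ?_
  have h := le_sum_T_mul_T_self (n := n) (a := i) (by omega)
  calc v i ^ 2 = 2 / n * (v i ^ 2 * (n / 2)) := by field_simp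
    _ ≤ _ := by gcongr

/-- `T_{n-1}` is orthogonal to all polynomials of degree `< n - 1` for the sum over the
Chebyshev points. -/
lemma sum_T_mul_eq_zero {n : ℕ} {Q : ℝ[X]} (hQ : Q.degree < (n - 1 : ℕ)) :
    ∑ k ∈ Finset.Icc 1 n,
      (Polynomial.Chebyshev.T ℝ (n - 1 : ℕ)).eval (chebPt n k) * Q.eval (chebPt n k) = 0 := by
  have hmem : Q ∈ degreeLT ℝ (n - 1) := by rwa [mem_degreeLT]
  rw [← Sequence.span_degreeLT (Polynomial.Chebyshev.chebyshevTsequence ℝ) (by simp)] at hmem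
  clear hQ
  induction hmem using Submodule.span_induction with
  | mem x hx =>
    obtain ⟨i, hi, rfl⟩ := hx
    have hi' : i < n - 1 := hi
    exact sum_T_mul_T_of_ne_s1 (n := n) (a := n - 1) (b := i) (by omega) (by omega) (by omega)
  | zero => simp
  | add x y _ _ hx hy => simp only [eval_add, mul_add, Finset.sum_add_distrib, hx, hy, add_zero]
  | smul a x _ hx =>
    simp only [eval_smul, smul_eq_mul, mul_left_comm _ a, ← Finset.mul_sum, hx, mul_zero]

lemma sin_le_sin_of_mem {a x : ℝ} (ha : -(Real.pi / 2) ≤ a) (h1 : a ≤ x)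
    (h2 : x ≤ Real.pi - a) : Real.sin a ≤ Real.sin x := by
  rcases le_total x (Real.pi / 2) with h | h
  · exact Real.sin_le_sin_of_le_of_le_pi_div_two ha h h1
  · rw [← Real.sin_pi_sub x]
    exact Real.sin_le_sin_of_le_of_le_pi_div_two ha (by linarith) (by linarith)

lemma sin_pos_of_two_le {n : ℕ} (hn : 2 ≤ n) : 0 < Real.sin (Real.pi / (2 * n)) := by
  have hn' : (2 : ℝ) ≤ n := by exact_mod_cast hn
  refine Real.sin_pos_of_pos_of_lt_pi (by positivity) ?_
  rw [div_lt_iff₀ (by positivity)]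
  nlinarith [Real.pi_pos]

lemma sin_le_sin_chebAngle {n k : ℕ} (hn : n ≠ 0) (hk : k ∈ Finset.Icc 1 n) :
    Real.sin (Real.pi / (2 * n)) ≤ Real.sin (chebAngle n k) := by
  obtain ⟨h1, h2⟩ := Finset.mem_Icc.mp hk
  have h1' : (1 : ℝ) ≤ k := by exact_mod_cast h1
  have h2' : (k : ℝ) ≤ n := by exact_mod_cast h2
  have hn' : (0 : ℝ) < n := by positivity
  have hpi := Real.pi_pos
  have hpos : 0 < Real.pi / (2 * n) := by positivity
  have e1 : chebAngle n k = (2 * k - 1) * (Real.pi / (2 * n)) := by rw [chebAngle]; ring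
  have e2 : Real.pi = 2 * n * (Real.pi / (2 * n)) := by field_simp
  refine sin_le_sin_of_mem (by linarith) ?_ ?_
  · rw [e1]; nlinarith
  · rw [e1]
    calc _ ≤ (2 * n - 1) * (Real.pi / (2 * n)) := by gcongr
      _ = _ := by linarith

/-- At a zero of `T_n`, the polynomial `T_{n-1}` takes the value `± sin θ`. -/
lemma abs_eval_T_pred {n k : ℕ} (hn : n ≠ 0) (hk : k ∈ Finset.Icc 1 n) :
    |(Polynomial.Chebyshev.T ℝ (n - 1 : ℕ)).eval (chebPt n k)| = Real.sin (chebAngle n k) := by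
  have hn' : (n : ℝ) ≠ 0 := Nat.cast_ne_zero.mpr hn
  have hnθ : (n : ℝ) * chebAngle n k = k * Real.pi - Real.pi / 2 := by
    rw [chebAngle]; field_simp
  have hcos : Real.cos (n * chebAngle n k) = 0 := by
    rw [hnθ, Real.cos_sub_pi_div_two, Real.sin_nat_mul_pi]
  have hsin : |Real.sin (n * chebAngle n k)| = 1 := by
    rw [← sq_eq_sq₀ (abs_nonneg _) zero_le_one, sq_abs, Real.sin_sq, hcos]; norm_num
  have hpos : 0 ≤ Real.sin (chebAngle n k) := by
    refine le_trans (Real.sin_nonneg_of_nonneg_of_le_pi (by positivity) ?_)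
      (sin_le_sin_chebAngle hn hk)
    refine div_le_self Real.pi_pos.le ?_
    have : (1 : ℝ) ≤ n := by exact_mod_cast Nat.one_le_iff_ne_zero.mpr hn
    linarith
  rw [chebPt_eq, Polynomial.Chebyshev.T_real_cos]
  push_cast [Nat.one_le_iff_ne_zero.mpr hn]
  rw [sub_mul, one_mul, Real.cos_sub, hcos, zero_mul, zero_add, abs_mul, hsin, one_mul,
    abs_of_nonneg hpos]

lemma gap_eq (n : ℕ) : Real.cos (Real.pi / (2 * n)) - Real.cos (3 * Real.pi / (2 * n)) =
    2 * Real.sin (2 * (Real.pi / (2 * n))) * Real.sin (Real.pi / (2 * n)) := by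
  rw [Real.cos_sub_cos, neg_mul, neg_mul, ← mul_neg, ← Real.sin_neg]
  congr 3 <;> ring

/-- The smallest distance between two Chebyshev points occurs at the ends of the interval: both
factors of `cos a - cos b = 2 sin ((a + b) / 2) sin ((b - a) / 2)` are smallest there. -/
lemma gap_le {n i k : ℕ} (hi : i ∈ Finset.Icc 1 n) (hk : k ∈ Finset.Icc 1 n) (hik : i ≠ k) :
    Real.cos (Real.pi / (2 * n)) - Real.cos (3 * Real.pi / (2 * n)) ≤
      |chebPt n k - chebPt n i| := by
  wlog h : i < k generalizing i k
  · rw [abs_sub_comm]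
    exact this hk hi hik.symm (by omega)
  have hi1 := (Finset.mem_Icc.mp hi).1
  have hkn := (Finset.mem_Icc.mp hk).2
  have hi1' : (1 : ℝ) ≤ i := by exact_mod_cast hi1
  have hkn' : (k : ℝ) ≤ n := by exact_mod_cast hkn
  have hik' : (i : ℝ) + 1 ≤ k := by exact_mod_cast h
  have hn' : (0 : ℝ) < n := by linarith
  have hpi := Real.pi_pos
  rw [gap_eq, abs_sub_comm]
  refine le_trans ?_ (le_abs_self _)
  set t := Real.pi / (2 * n) with ht
  have htpos : 0 < t := by positivity
  have hnt : 2 * n * t = Real.pi := by rw [ht]; field_simp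
  have e : chebPt n i - chebPt n k =
      2 * Real.sin ((i + k - 1) * t) * Real.sin ((k - i) * t) := by
    rw [chebPt, chebPt, Real.cos_sub_cos, neg_mul, neg_mul, ← mul_neg, ← Real.sin_neg]
    congr 3 <;> rw [ht] <;> field_simp <;> ring
  rw [e]
  have s1 : Real.sin (2 * t) ≤ Real.sin ((i + k - 1) * t) :=
    sin_le_sin_of_mem (by linarith) (by gcongr; linarith) (by rw [← hnt]; nlinarith)
  have s2 : Real.sin t ≤ Real.sin ((k - i) * t) :=
    sin_le_sin_of_mem (by linarith) (by nlinarith) (by rw [← hnt]; nlinarith)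
  have p1 : 0 ≤ Real.sin t :=
    Real.sin_nonneg_of_nonneg_of_le_pi htpos.le (by rw [← hnt]; nlinarith)
  have p2 : 0 ≤ Real.sin (2 * t) :=
    Real.sin_nonneg_of_nonneg_of_le_pi (by linarith) (by rw [← hnt]; nlinarith)
  have p3 := p2.trans s1
  gcongr

lemma gap_pos {n : ℕ} (hn : 2 ≤ n) :
    0 < Real.cos (Real.pi / (2 * n)) - Real.cos (3 * Real.pi / (2 * n)) := by
  rw [gap_eq]
  have h1 := sin_pos_of_two_le hn
  have hn' : (2 : ℝ) ≤ n := by exact_mod_cast hn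
  have h2 : 0 < Real.sin (2 * (Real.pi / (2 * n))) := by
    refine Real.sin_pos_of_pos_of_lt_pi (by positivity) ?_
    rw [← mul_div_assoc, div_lt_iff₀ (by positivity)]
    nlinarith [Real.pi_pos]
  positivity

lemma abs_chebPt_sub_le (n i j : ℕ) : |chebPt n j - chebPt n i| ≤ 2 := by
  rw [chebPt, chebPt, abs_le]
  constructor <;>
  linarith [Real.cos_le_one ((2 * (i : ℝ) - 1) * Real.pi / (2 * (n : ℝ))),
    Real.cos_le_one ((2 * (j : ℝ) - 1) * Real.pi / (2 * (n : ℝ))),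
    Real.neg_one_le_cos ((2 * (i : ℝ) - 1) * Real.pi / (2 * (n : ℝ))),
    Real.neg_one_le_cos ((2 * (j : ℝ) - 1) * Real.pi / (2 * (n : ℝ)))]

/-- The bound for a Lagrange basis polynomial of the nodes outside `D` at a node in `D`. -/
lemma abs_eval_le_s1 {n : ℕ} (hn : 2 ≤ n) {D : Finset ℕ} (hD : D ⊆ Finset.Icc 1 n) {P : ℝ[X]}
    (hP : P.degree < (n - D.card : ℕ)) {j k : ℕ} (hj : j ∈ Finset.Icc 1 n) (hjD : j ∉ D)
    (hk : k ∈ D) (hPj : P.eval (chebPt n j) = 1)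
    (hP0 : ∀ i ∈ Finset.Icc 1 n, i ∉ D → i ≠ j → P.eval (chebPt n i) = 0) :
    |P.eval (chebPt n k)| ≤ 2 ^ (D.card - 1) / (Real.sin (Real.pi / (2 * n)) *
      (Real.cos (Real.pi / (2 * n)) - Real.cos (3 * Real.pi / (2 * n))) ^ (D.card - 1)) := by
  have hn0 : n ≠ 0 := by omega
  have hkI := hD hk
  have hjk : j ≠ k := fun h => hjD (h ▸ hk)
  set δ := Real.cos (Real.pi / (2 * n)) - Real.cos (3 * Real.pi / (2 * n)) with hδ
  set R : ℝ[X] := ∏ i ∈ D.erase k, (X - C (chebPt n i)) with hR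
  have hRdeg : R.degree = (D.card - 1 : ℕ) := by
    rw [hR, degree_prod]
    simp [Finset.card_erase_of_mem hk]
  have hcard1 : 1 ≤ D.card := Finset.card_pos.mpr ⟨k, hk⟩
  have hcard2 : D.card ≤ n := by simpa using Finset.card_le_card hD
  have hQdeg : (P * R).degree < (n - 1 : ℕ) := by
    rw [degree_mul, hRdeg]
    rcases eq_or_ne P 0 with rfl | h0
    · simp
    rw [degree_eq_natDegree h0] at hP ⊢
    norm_cast at hP ⊢
    omega
  have hsum := sum_T_mul_eq_zero hQdeg
  have hRk : δ ^ (D.card - 1) ≤ |R.eval (chebPt n k)| := by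
    rw [hR, eval_prod, Finset.abs_prod, ← Finset.card_erase_of_mem hk]
    refine (Finset.prod_const δ).symm.trans_le
      (Finset.prod_le_prod (fun _ _ => (gap_pos hn).le) fun i hi => ?_)
    obtain ⟨hne, hiD⟩ := Finset.mem_erase.mp hi
    simpa only [eval_sub, eval_X, eval_C] using gap_le (hD hiD) hkI hne
  have hRj : |R.eval (chebPt n j)| ≤ 2 ^ (D.card - 1) := by
    rw [hR, eval_prod, Finset.abs_prod, ← Finset.card_erase_of_mem hk]
    refine (Finset.prod_le_prod (fun _ _ => abs_nonneg _) fun i _ => ?_).trans_eq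
      (Finset.prod_const 2)
    simpa using abs_chebPt_sub_le n i j
  rw [← Finset.sum_subset (s₁ := {j, k}), Finset.sum_pair hjk] at hsum
  rotate_left
  · intro i hi
    simp only [Finset.mem_insert, Finset.mem_singleton] at hi
    rcases hi with rfl | rfl <;> assumption
  · intro i hi hi'
    simp only [Finset.mem_insert, Finset.mem_singleton, not_or] at hi'
    by_cases hiD : i ∈ D
    · have : R.eval (chebPt n i) = 0 := by
        rw [hR, eval_prod]
        exact Finset.prod_eq_zero (Finset.mem_erase.mpr ⟨hi'.2, hiD⟩) (by simp)
      simp [this]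
    · simp [hP0 i hi hiD hi'.1]
  simp only [eval_mul, hPj, one_mul] at hsum
  have heq := congrArg abs (eq_neg_of_add_eq_zero_right hsum)
  rw [abs_neg, abs_mul, abs_mul, abs_mul, abs_eval_T_pred hn0 hkI, abs_eval_T_pred hn0 hj] at heq
  have hsin := sin_pos_of_two_le hn
  have hsk := sin_le_sin_chebAngle hn0 hkI
  have hsk0 := hsin.le.trans hsk
  have hδpos : 0 < δ := gap_pos hn
  rw [le_div_iff₀ (by positivity)]
  calc _ = Real.sin (Real.pi / (2 * n)) * (|P.eval (chebPt n k)| * δ ^ (D.card - 1)) := by ring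
    _ ≤ Real.sin (chebAngle n k) * (|P.eval (chebPt n k)| * |R.eval (chebPt n k)|) := by gcongr
    _ = Real.sin (chebAngle n j) * |R.eval (chebPt n j)| := heq
    _ ≤ 1 * 2 ^ (D.card - 1) := by
      gcongr
      exact Real.sin_le_one _
    _ = _ := one_mul _

/-- For `n ≥ 2`, `1 ≤ s ≤ n-1`, and a subset of `{1,…,n}` of size `n - s` enumerated by a
strictly increasing `g`, the Chebyshev-Vandermonde matrix `G` with entries
`T_{i-1}(ρ_{g j}^{(n)})` is invertible and the square of the Frobenius norm of `G⁻¹`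
satisfies the stated bound. -/
theorem stmt_1 (n s : ℕ) (hn : 2 ≤ n) (hs1 : 1 ≤ s) (hs2 : s ≤ n - 1)
    (g : Fin (n - s) → ℕ) (hg : StrictMono g) (hgmem : ∀ j, g j ∈ Finset.Icc 1 n)
    (G : Matrix (Fin (n - s)) (Fin (n - s)) ℝ)
    (hG : ∀ i j, G i j = (Polynomial.Chebyshev.T ℝ (i : ℕ)).eval (chebPt n (g j))) :
    IsUnit G.det ∧
      (∑ i, ∑ j, (G⁻¹ i j) ^ 2) ≤
        (2 * ((n : ℝ) - s) / n) *
          (1 + (s : ℝ) * 4 ^ (s - 1) /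
            ((Real.sin (Real.pi / (2 * n))) ^ 2 *
              (Real.cos (Real.pi / (2 * n)) - Real.cos (3 * Real.pi / (2 * n))) ^ (2 * (s - 1)))) := by
  have hn0 : n ≠ 0 := by omega
  -- The polynomial with Chebyshev coefficients `v`, and its values at the nodes.
  let p : (Fin (n - s) → ℝ) → ℝ[X] := fun v => ∑ i, C (v i) * Polynomial.Chebyshev.T ℝ (i : ℕ)
  have hpe (v : Fin (n - s) → ℝ) (x : ℝ) :
      (p v).eval x = ∑ i, v i * (Polynomial.Chebyshev.T ℝ (i : ℕ)).eval x := by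
    simp [p, eval_finsetSum]
  have hpG (v : Fin (n - s) → ℝ) (j) : (p v).eval (chebPt n (g j)) = Matrix.vecMul v G j := by
    simp [hpe, Matrix.vecMul, dotProduct, hG]
  have hpdeg (v : Fin (n - s) → ℝ) : (p v).degree < (n - s : ℕ) := by
    rw [← mem_degreeLT]
    refine Submodule.sum_mem _ fun i _ => ?_
    rw [mem_degreeLT]
    refine (C_mul' (v i) _ ▸ degree_smul_le (v i) _).trans_lt ?_
    rw [Polynomial.Chebyshev.degree_T]
    simp
  have hle (v : Fin (n - s) → ℝ) :
      ∑ i, v i ^ 2 ≤ 2 / n * ∑ k ∈ Finset.Icc 1 n, (p v).eval (chebPt n k) ^ 2 := by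
    simp only [hpe]
    exact sum_sq_le (Nat.sub_le _ _) hn0 v
  have hinj : Function.Injective (chebPt n ∘ g) := by
    intro i j hij
    by_contra hne
    have := gap_le (hgmem i) (hgmem j) (fun h => hne (hg.injective h))
    have h0 : chebPt n (g j) - chebPt n (g i) = 0 := sub_eq_zero.mpr hij.symm
    rw [h0, abs_zero] at this
    exact absurd (gap_pos hn) (not_lt.mpr this)
  have hunit : IsUnit G.det := by
    rw [isUnit_iff_ne_zero]
    intro hdet
    obtain ⟨v, hv, hvG⟩ := Matrix.exists_vecMul_eq_zero_iff.mpr hdet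
    have hp0 : p v = 0 := by
      by_contra hne
      refine hne (eq_zero_of_natDegree_lt_card_of_eval_eq_zero _ hinj (fun i => ?_) ?_)
      · simp [hpG, hvG]
      · rw [Fintype.card_fin]
        exact (natDegree_lt_iff_degree_lt hne).mpr (hpdeg v)
    have h := hle v
    simp only [hp0, eval_zero] at h
    have h0 : ∑ i, v i ^ 2 = 0 :=
      le_antisymm (by simpa using h) (Finset.sum_nonneg fun _ _ => sq_nonneg _)
    rw [Finset.sum_eq_zero_iff_of_nonneg fun _ _ => sq_nonneg _] at h0
    exact hv (funext fun i => by simpa using h0 i (Finset.mem_univ i))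
  refine ⟨hunit, ?_⟩
  set δ := Real.cos (Real.pi / (2 * n)) - Real.cos (3 * Real.pi / (2 * n)) with hδ
  set B : ℝ := (s : ℝ) * 4 ^ (s - 1) /
    ((Real.sin (Real.pi / (2 * n))) ^ 2 * δ ^ (2 * (s - 1))) with hB
  set S : Finset ℕ := Finset.univ.image g with hS
  have hSsub : S ⊆ Finset.Icc 1 n := by
    intro i hi
    obtain ⟨j, _, rfl⟩ := Finset.mem_image.mp hi
    exact hgmem j
  have hScard : S.card = n - s := by
    rw [hS, Finset.card_image_of_injective _ hg.injective]; simp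
  set D : Finset ℕ := Finset.Icc 1 n \ S with hD
  have hDcard : D.card = s := by
    rw [hD, Finset.card_sdiff_of_subset hSsub, hScard]
    simp only [Nat.card_Icc]
    omega
  have hrow (j : Fin (n - s)) : ∑ i, (G⁻¹ j i) ^ 2 ≤ 2 / n * (1 + B) := by
    refine (hle (G⁻¹ j)).trans ?_
    have hval (k) : (p (G⁻¹ j)).eval (chebPt n (g k)) = if j = k then 1 else 0 := by
      rw [hpG, ← Matrix.one_apply, ← Matrix.nonsing_inv_mul G hunit]
      rfl
    gcongr
    rw [← Finset.sum_sdiff hSsub, add_comm]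
    refine add_le_add (le_of_eq ?_) ?_
    · rw [hS, Finset.sum_image fun _ _ _ _ h => hg.injective h]
      simp [hval]
    · calc _ ≤ ∑ k ∈ D, (2 ^ (s - 1) / (Real.sin (Real.pi / (2 * n)) * δ ^ (s - 1))) ^ 2 := by
            refine Finset.sum_le_sum fun k hk => ?_
            have h := abs_eval_le_s1 hn (D := D) Finset.sdiff_subset (P := p (G⁻¹ j))
              (by rw [hDcard]; exact hpdeg _) (hgmem j) (by simp [hD, hS]) hk (by simp [hval])
              (by
                intro i hi hiD hij
                have hiS : i ∈ S := by
                  by_contra h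
                  exact hiD (Finset.mem_sdiff.mpr ⟨hi, h⟩)
                obtain ⟨l, _, rfl⟩ := Finset.mem_image.mp hiS
                rw [hval, if_neg]
                rintro rfl
                exact hij rfl)
            rw [hDcard] at h
            exact sq_le_sq' (by linarith [neg_abs_le ((p (G⁻¹ j)).eval (chebPt n k))])
              ((le_abs_self _).trans h)
        _ = B := by
            rw [Finset.sum_const, hDcard, nsmul_eq_mul, hB, div_pow, mul_pow, ← pow_mul,
              ← pow_mul, mul_comm (s - 1) 2, pow_mul 2 2, mul_div_assoc]
            norm_num
  calc _ ≤ ∑ _j : Fin (n - s), 2 / (n : ℝ) * (1 + B) := Finset.sum_le_sum fun j _ => hrow j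
    _ = _ := by
      rw [Finset.sum_const, Finset.card_univ, Fintype.card_fin, nsmul_eq_mul,
        Nat.cast_sub (by omega)]
      ring
end

section
/- Let 3 ≤ m ≤ P be integers and let H be an m×P random matrix whose entries are independent standard Gaussian N(0,1) random variables. Then the probability that there exists a subset S ⊆ {1,…,P} with |S| = m such that the m×m submatrix H_S formed by the columns of H indexed by S is either singular or satisfies κ₂(H_S) > m·P^{2(P−m)} is strictly less than 5.6 / P^{P−m}. -/
/-!
By a union bound it suffices to treat one square Gaussian matrix `A` of size `m`: the number of
subsets is `C(P, m) = C(P, P - m) ≤ P ^ (P - m)`, so for `P > m` the claim follows from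
`P(det A = 0 or κ₂(A) > m t) ≤ 5.5 / t` for `t ≥ 16` (`single_matrix`), at `t = P ^ (2 (P - m))`;
for `P = m` the bound exceeds `1`.

For one matrix, singularity has probability zero (`det_null`), and the tail of the condition number
rests on three facts.

* `norm_mean`: `E ‖A‖ ≤ (9/4) √m`. For a Gaussian vector `x` independent of `A`, `|A x|` dominates
  `‖A‖ |⟨z, x⟩|` with `z` a top singular vector, a fixed unit direction given `A`. Comparing moments
  of order `2m` gives `E ‖A‖^{2m} · E g^{2m} ≤ (E |h|^{2m})²` with `g` a standard Gaussian variable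
  and `h` a standard Gaussian vector; Stirling's formula and an exponential moment finish.
* `core`: for fixed `u`, `P(‖A‖ |A⁻¹ u| > τ) ≤ √(2/π) |u| E‖A‖ / √(τ² - |u|²)`. By rotation
  invariance `u` is a multiple of `e₀`, and `1 / |A⁻¹ e₀|` is the distance `|y₀|` of the first row
  to the span of the others. Given those others, `y₀` is standard Gaussian, and `‖A‖²` is at most
  `N'² + y₀²`, where `N'` does not depend on `y₀`. The event thus confines `y₀` to an interval of
  length `2 N' / √(κ² - 1)`, with `κ = τ / |u|`.
* `good_directions`: if `‖A‖ ‖A⁻¹‖ > s`, then a Gaussian vector `u` satisfies `‖A‖ |A⁻¹ u| > 3 s / 4`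
  and `|u| ≤ 3 s / 20` with probability at least `0.45`.

Integrating over both `A` and `u`, with `E |u| ≤ √m`, the second and third facts give
`0.45 · P(κ₂(A) > s) ≤ √(2/π) · (9/4) √m · √m / (√(24/25) · 3 s / 4)`, and `s = m t`.
-/

open MeasureTheory ProbabilityTheory

/-- The spectral (ℓ₂ operator) norm of a square real matrix. -/
noncomputable def l2OpNorm {k : Type*} [Fintype k] [DecidableEq k]
    (A : Matrix k k ℝ) : ℝ :=
  ‖LinearMap.toContinuousLinearMap (Matrix.toEuclideanLin A)‖

/-! ### Gaussian vectors and matrices -/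

/-- Standard Gaussian measure on `ι → ℝ`. -/
noncomputable abbrev gv (ι : Type*) [Fintype ι] : Measure (ι → ℝ) :=
  Measure.pi fun _ => gaussianReal 0 1

/-- The law of an `ι × κ` matrix with i.i.d. standard Gaussian entries, as a measure on curried
functions: the rows are independent standard Gaussian vectors. -/
noncomputable abbrev gm (ι κ : Type*) [Fintype ι] [Fintype κ] : Measure (ι → κ → ℝ) :=
  Measure.pi fun _ => gv κ

lemma mp_precomp {α β : Type*} [Fintype α] [Fintype β] (f : α → β) (hf : f.Injective) :
    MeasurePreserving (fun (ω : β → ℝ) a => ω (f a)) (gv β) (gv α) := by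
  refine ⟨by fun_prop, ?_⟩
  have h : iIndepFun (fun (a : α) (ω : β → ℝ) => ω (f a)) (gv β) :=
    (iIndepFun_pi (μ := fun _ : β => gaussianReal 0 1) (X := fun _ => id)
    (fun _ => aemeasurable_id)).precomp hf
  rw [iIndepFun_iff_map_fun_eq_pi_map
    (fun a => (measurable_pi_apply (f a)).aemeasurable)] at h
  rw [h]
  congr 1
  funext a
  exact (measurePreserving_eval (fun _ : β => gaussianReal 0 1) (f a)).map_eq

lemma mp_uncurry (ι κ : Type*) [Fintype ι] [Fintype κ] :
    MeasurePreserving (fun (A : ι → κ → ℝ) (p : ι × κ) => A p.1 p.2) (gm ι κ) (gv (ι × κ)) := by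
  refine ⟨by fun_prop, ?_⟩
  refine (Measure.pi_eq fun s hs => ?_).symm
  rw [Measure.map_apply (by fun_prop) (MeasurableSet.univ_pi hs)]
  have : (fun (A : ι → κ → ℝ) (p : ι × κ) => A p.1 p.2) ⁻¹' (Set.univ.pi s)
      = Set.univ.pi fun i => Set.univ.pi fun j => s (i, j) := by
    ext A; simp [Set.mem_pi]
  rw [this, Measure.pi_pi]
  simp_rw [Measure.pi_pi]
  rw [Fintype.prod_prod_type]

lemma mp_curry (ι κ : Type*) [Fintype ι] [Fintype κ] :
    MeasurePreserving (fun (ω : ι × κ → ℝ) (i : ι) (j : κ) => ω (i, j)) (gv (ι × κ)) (gm ι κ) := by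
  refine ⟨by fun_prop, ?_⟩
  rw [← (mp_uncurry ι κ).map_eq, Measure.map_map (by fun_prop) (by fun_prop)]
  exact Measure.map_id

lemma mp_transpose (ι κ : Type*) [Fintype ι] [Fintype κ] :
    MeasurePreserving (fun (A : ι → κ → ℝ) (j : κ) (i : ι) => A i j) (gm ι κ) (gm κ ι) :=
  (mp_curry κ ι).comp ((mp_precomp (Prod.swap : κ × ι → ι × κ) Prod.swap_injective).comp
    (mp_uncurry ι κ))

/-- Selecting distinct columns of a Gaussian matrix gives a Gaussian matrix. -/
lemma mp_sub {ι κ κ' : Type*} [Fintype ι] [Fintype κ] [Fintype κ'] (e : κ' → κ)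
    (he : e.Injective) :
    MeasurePreserving (fun (ω : ι × κ → ℝ) (i : ι) (j : κ') => ω (i, e j))
      (gv (ι × κ)) (gm ι κ') :=
  (mp_curry ι κ').comp (mp_precomp (fun p : ι × κ' => (p.1, e p.2))
    (fun p q h => by
      simp only [Prod.mk.injEq] at h
      exact Prod.ext h.1 (he h.2)))

/-- Rotation invariance of the standard Gaussian measure, for an orthogonal matrix `Q`. -/
lemma mp_rot {ι : Type*} [Fintype ι] [DecidableEq ι] (Q : Matrix ι ι ℝ) (hQ : Q * Q.transpose = 1) :
    MeasurePreserving (fun x : ι → ℝ => Q.mulVec x) (gv ι) (gv ι) := by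
  have hQ' : Q.transpose * Q = 1 := mul_eq_one_comm.mp hQ
  have hm : Measurable (fun x : ι → ℝ => Q.mulVec x) :=
    (Continuous.matrix_mulVec continuous_const continuous_id).measurable
  refine ⟨hm, ?_⟩
  let f : EuclideanSpace ℝ ι →ₗᵢ[ℝ] EuclideanSpace ℝ ι :=
    { Matrix.toEuclideanLin Q with
      norm_map' := by
        intro x
        have : ‖WithLp.toLp 2 (Q.mulVec x.ofLp)‖ = ‖x‖ := by
          rw [← sq_eq_sq₀ (norm_nonneg _) (norm_nonneg _), EuclideanSpace.real_norm_sq_eq,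
            EuclideanSpace.real_norm_sq_eq]
          have h1 : (Q.mulVec x.ofLp) ⬝ᵥ (Q.mulVec x.ofLp) = x.ofLp ⬝ᵥ x.ofLp := by
            rw [Matrix.dotProduct_mulVec, Matrix.vecMul_mulVec, ← Matrix.dotProduct_mulVec, hQ',
              Matrix.one_mulVec]
          simpa [dotProduct, sq] using h1
        exact this }
  have h := stdGaussian_map (f.toLinearIsometryEquiv rfl)
  rw [← map_pi_eq_stdGaussian] at h
  have h2 := congrArg (Measure.map (WithLp.ofLp : EuclideanSpace ℝ ι → ι → ℝ)) h
  rw [Measure.map_map (by fun_prop) (by fun_prop), Measure.map_map (by fun_prop) (by fun_prop),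
    Measure.map_map (by fun_prop) (by fun_prop)] at h2
  have h3 : (WithLp.ofLp ∘ WithLp.toLp 2 : (ι → ℝ) → ι → ℝ) = id := rfl
  rw [h3, Measure.map_id] at h2
  exact h2

/-- A unit vector can be prescribed as the `i`-th row of an orthogonal matrix. -/
lemma exists_rot {ι : Type*} [Fintype ι] [DecidableEq ι] (i : ι) (n : ι → ℝ) (hn : n ⬝ᵥ n = 1) :
    ∃ Q : Matrix ι ι ℝ, Q * Q.transpose = 1 ∧ Q i = n := by
  have hv : Orthonormal ℝ (({i} : Set ι).domRestrict fun _ : ι => WithLp.toLp 2 n) := by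
    constructor
    · intro j
      simp only [Set.domRestrict_apply]
      rw [← sq_eq_sq₀ (norm_nonneg _) zero_le_one, EuclideanSpace.real_norm_sq_eq]
      simpa [dotProduct, sq] using hn
    · intro a b hab
      exact absurd (Subsingleton.elim a b) hab
  obtain ⟨b, hb⟩ := hv.exists_orthonormalBasis_extension_of_card_eq (ι := ι) (by simp)
  refine ⟨Matrix.of fun j => (b j).ofLp, ?_, ?_⟩
  · ext j k
    have := orthonormal_iff_ite.mp b.orthonormal j k
    rw [Matrix.mul_apply, Matrix.one_apply, ← this]
    simp [PiLp.inner_apply, mul_comm]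
  · show (b i).ofLp = n
    rw [hb i rfl]

/-- Fubini for the first coordinate of a power of `ν`. -/
lemma lintegral_cons {α : Type*} [MeasurableSpace α] (ν : Measure α) [IsProbabilityMeasure ν]
    (k : ℕ) (f : (Fin (k+1) → α) → ENNReal) (hf : Measurable f) :
    ∫⁻ x, f x ∂(Measure.pi fun _ : Fin (k+1) => ν)
      = ∫⁻ y, ∫⁻ a, f (Fin.cons a y) ∂ν ∂(Measure.pi fun _ : Fin k => ν) := by
  have h := (measurePreserving_piFinSuccAbove (fun _ : Fin (k+1) => ν) 0).symm
  rw [← h.map_eq, lintegral_map hf h.measurable, lintegral_prod_symm']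
  · refine lintegral_congr fun y => lintegral_congr fun a => congrArg f ?_
    simp [MeasurableEquiv.piFinSuccAbove, Fin.insertNthEquiv]
  · exact hf.comp h.measurable

/-! ### The Euclidean norm and the operator norm -/

section Deterministic

open scoped Matrix Matrix.Norms.L2Operator

/-- The Euclidean norm of a plain function `ι → ℝ`. -/
noncomputable def en {ι : Type*} [Fintype ι] (x : ι → ℝ) : ℝ := ‖WithLp.toLp 2 x‖

variable {ι : Type*} [Fintype ι]

lemma en_nonneg (x : ι → ℝ) : 0 ≤ en x := norm_nonneg _

lemma en_sq (x : ι → ℝ) : en x ^ 2 = x ⬝ᵥ x := by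
  rw [en, EuclideanSpace.real_norm_sq_eq]
  simp [dotProduct, sq]

lemma en_sq' (x : ι → ℝ) : en x ^ 2 = ∑ i, x i ^ 2 := by
  rw [en_sq]; simp [dotProduct, sq]

lemma en_smul (c : ℝ) (x : ι → ℝ) : en (c • x) = |c| * en x := by
  simp [en, norm_smul]

lemma en_pos {x : ι → ℝ} (hx : x ≠ 0) : 0 < en x := by
  refine norm_pos_iff.mpr fun h => hx ?_
  simpa using h

lemma abs_dotProduct_le (x y : ι → ℝ) : |x ⬝ᵥ y| ≤ en x * en y := by
  have := abs_real_inner_le_norm (WithLp.toLp 2 y) (WithLp.toLp 2 x)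
  rw [mul_comm]
  simpa [en, EuclideanSpace.inner_toLp_toLp] using this

lemma continuous_en : Continuous (en : (ι → ℝ) → ℝ) := by
  unfold en; fun_prop

variable [DecidableEq ι]

lemma on_eq (A : Matrix ι ι ℝ) : l2OpNorm A = ‖A‖ := rfl

lemma on_nonneg (A : Matrix ι ι ℝ) : 0 ≤ l2OpNorm A := norm_nonneg _

lemma en_mulVec_le (A : Matrix ι ι ℝ) (x : ι → ℝ) : en (A *ᵥ x) ≤ l2OpNorm A * en x :=
  Matrix.l2_opNorm_mulVec A (WithLp.toLp 2 x)

lemma on_transpose (A : Matrix ι ι ℝ) : l2OpNorm Aᵀ = l2OpNorm A := by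
  rw [on_eq, on_eq, ← Matrix.l2_opNorm_conjTranspose, Matrix.conjTranspose_eq_transpose_of_trivial,
    Matrix.transpose_transpose]

lemma on_mul_le (A B : Matrix ι ι ℝ) : l2OpNorm (A * B) ≤ l2OpNorm A * l2OpNorm B :=
  Matrix.l2_opNorm_mul A B

lemma on_orth_le [Nonempty ι] (Q : Matrix ι ι ℝ) (hQ : Q * Qᵀ = 1) : l2OpNorm Q ≤ 1 := by
  have h := Matrix.l2_opNorm_conjTranspose_mul_self Qᵀ
  rw [Matrix.conjTranspose_eq_transpose_of_trivial, Matrix.transpose_transpose, hQ] at h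
  rw [← on_transpose, on_eq]
  have h1 : ‖(1 : Matrix ι ι ℝ)‖ = 1 := by
    rw [← Matrix.diagonal_one, Matrix.l2_opNorm_diagonal]
    simp
  rw [h1] at h
  nlinarith [norm_nonneg Qᵀ]

lemma on_mul_orth [Nonempty ι] (A Q : Matrix ι ι ℝ) (hQ : Q * Qᵀ = 1) :
    l2OpNorm (A * Q) = l2OpNorm A := by
  have hQ' : Qᵀ * Qᵀᵀ = 1 := by rw [Matrix.transpose_transpose]; exact mul_eq_one_comm.mp hQ
  apply le_antisymm
  · exact (on_mul_le _ _).trans (mul_le_of_le_one_right (on_nonneg _) (on_orth_le Q hQ))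
  · calc l2OpNorm A = l2OpNorm ((A * Q) * Qᵀ) := by rw [Matrix.mul_assoc, hQ, Matrix.mul_one]
      _ ≤ _ := (on_mul_le _ _).trans (mul_le_of_le_one_right (on_nonneg _) (on_orth_le _ hQ'))

lemma on_orth_mul [Nonempty ι] (A Q : Matrix ι ι ℝ) (hQ : Q * Qᵀ = 1) :
    l2OpNorm (Q * A) = l2OpNorm A := by
  have hQ' : Qᵀ * Qᵀᵀ = 1 := by rw [Matrix.transpose_transpose]; exact mul_eq_one_comm.mp hQ
  rw [← on_transpose, Matrix.transpose_mul, on_mul_orth _ _ hQ', on_transpose]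

lemma continuous_on_norm : Continuous fun A : ι → ι → ℝ => l2OpNorm (Matrix.of A) := by
  let f : (ι → ι → ℝ) →ₗ[ℝ] (EuclideanSpace ℝ ι →L[ℝ] EuclideanSpace ℝ ι) :=
    LinearMap.toContinuousLinearMap.toLinearMap ∘ₗ
      (Matrix.toEuclideanLin : Matrix ι ι ℝ ≃ₗ[ℝ] _).toLinearMap ∘ₗ
        (Matrix.ofLinearEquiv ℝ : (ι → ι → ℝ) ≃ₗ[ℝ] Matrix ι ι ℝ).toLinearMap
  have : Continuous f := f.continuous_of_finiteDimensional
  exact this.norm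

/-- The top right singular vector `z` of `A` detects the whole norm: `‖A x‖ ≥ ‖A‖ |⟨z, x⟩|`.
It is `Aᵀ y / ‖A‖` for a unit vector `y` at which `‖Aᵀ y‖` is maximal. -/
lemma exists_lower [Nonempty ι] (A : Matrix ι ι ℝ) :
    ∃ z : ι → ℝ, z ⬝ᵥ z = 1 ∧ ∀ x, l2OpNorm A * |z ⬝ᵥ x| ≤ en (A *ᵥ x) := by
  rcases (on_nonneg A).eq_or_lt with h0 | h0
  · refine ⟨Pi.single (Classical.arbitrary ι) 1, by simp, fun x => ?_⟩
    rw [← h0, zero_mul]; exact en_nonneg _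
  let L := LinearMap.toContinuousLinearMap (Matrix.toEuclideanLin Aᵀ)
  have hL : ‖L‖ = l2OpNorm A := on_transpose A
  have : Nontrivial (EuclideanSpace ℝ ι) := inferInstance
  obtain ⟨y, hy, hmax⟩ := (isCompact_sphere (0 : EuclideanSpace ℝ ι) 1).exists_isMaxOn
    (NormedSpace.sphere_nonempty.mpr zero_le_one) (L.continuous.norm.continuousOn)
  have hy1 : ‖y‖ = 1 := by simpa using hy
  have hle : ‖L‖ ≤ ‖L y‖ := by
    refine L.opNorm_le_bound (norm_nonneg _) fun x => ?_
    rcases eq_or_ne x 0 with rfl | hx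
    · simp
    have hx' : 0 < ‖x‖ := norm_pos_iff.mpr hx
    have h1 : ‖x‖⁻¹ • x ∈ Metric.sphere (0 : EuclideanSpace ℝ ι) 1 := by
      simp [norm_smul, hx'.ne']
    have h2 : ‖L (‖x‖⁻¹ • x)‖ ≤ ‖L y‖ := hmax h1
    rw [map_smul, norm_smul, norm_inv, norm_norm, inv_mul_le_iff₀ hx'] at h2
    linarith
  have heq : ‖L y‖ = l2OpNorm A := by
    rw [← hL]
    exact le_antisymm ((L.le_opNorm y).trans_eq (by rw [hy1, mul_one])) hle
  have heq' : en (Aᵀ *ᵥ y.ofLp) = l2OpNorm A := heq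
  refine ⟨(l2OpNorm A)⁻¹ • (Aᵀ *ᵥ y.ofLp), ?_, fun x => ?_⟩
  · rw [← en_sq, en_smul, heq', abs_of_pos (inv_pos.mpr h0), inv_mul_cancel₀ h0.ne', one_pow]
  · rw [smul_dotProduct, smul_eq_mul, abs_mul, abs_of_pos (inv_pos.mpr h0), ← mul_assoc,
      mul_inv_cancel₀ h0.ne', one_mul, Matrix.mulVec_transpose, ← Matrix.dotProduct_mulVec]
    refine (abs_dotProduct_le _ _).trans_eq ?_
    have : en y.ofLp = 1 := hy1
    rw [this, one_mul]

/-- The coordinate projection such that `B * colZero` is `B` with its first column replaced by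
zero. -/
noncomputable def colZero {k : ℕ} : Matrix (Fin (k+1)) (Fin (k+1)) ℝ :=
  Matrix.diagonal (Fin.cons 0 fun _ => 1)

lemma on_colZero_le {k : ℕ} (B : Matrix (Fin (k+1)) (Fin (k+1)) ℝ) :
    l2OpNorm (B * colZero) ≤ l2OpNorm B := by
  refine (on_mul_le _ _).trans (mul_le_of_le_one_right (on_nonneg _) ?_)
  rw [on_eq, colZero, Matrix.l2_opNorm_diagonal]
  refine (pi_norm_le_iff_of_nonneg zero_le_one).mpr fun i => ?_
  refine Fin.cases ?_ (fun j => ?_) i <;> simp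

/-- If the first column of `B` vanishes off the corner, then `B Bᵀ` is `(B * colZero)(B * colZero)ᵀ`
plus the diagonal matrix with the single entry `(B 0 0)²`. -/
lemma on_sq_le {k : ℕ} (B : Matrix (Fin (k+1)) (Fin (k+1)) ℝ) (hB : ∀ i : Fin k, B i.succ 0 = 0) :
    l2OpNorm B ^ 2 ≤ l2OpNorm (B * colZero) ^ 2 + B 0 0 ^ 2 := by
  have key : ∀ C : Matrix (Fin (k+1)) (Fin (k+1)) ℝ, l2OpNorm C ^ 2 = ‖C * Cᵀ‖ := by
    intro C
    have h := Matrix.l2_opNorm_conjTranspose_mul_self Cᵀ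
    rw [Matrix.conjTranspose_eq_transpose_of_trivial, Matrix.transpose_transpose] at h
    rw [h, ← sq, ← on_eq, on_transpose]
  have hdec : B * Bᵀ = (B * colZero) * (B * colZero)ᵀ
      + Matrix.diagonal (Fin.cons (B 0 0 ^ 2) fun _ => 0) := by
    have h0 : ∀ i : Fin (k+1), (B * colZero (k := k)) i 0 = 0 := fun i => by simp [colZero, Matrix.mul_diagonal]
    have h1 : ∀ (i : Fin (k+1)) (j : Fin k), (B * colZero (k := k)) i j.succ = B i j.succ :=
      fun i j => by simp [colZero, Matrix.mul_diagonal]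
    ext i j
    rw [Matrix.mul_apply, Matrix.add_apply, Matrix.mul_apply]
    simp only [Matrix.transpose_apply, Fin.sum_univ_succ, h0, h1]
    refine Fin.cases ?_ (fun i' => ?_) i <;> refine Fin.cases ?_ (fun j' => ?_) j
    · simp; ring
    · simp [hB, (Fin.succ_ne_zero _).symm]
    · simp [hB]
    · simp [hB, Matrix.diagonal_apply]
  rw [key, key, hdec]
  refine (norm_add_le _ _).trans (add_le_add le_rfl ?_)
  rw [Matrix.l2_opNorm_diagonal]
  refine (pi_norm_le_iff_of_nonneg (sq_nonneg _)).mpr fun i => ?_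
  refine Fin.cases ?_ (fun j => ?_) i
  · simp
  · simp [sq_nonneg]

end Deterministic

/-! ### Almost sure invertibility and scalar Gaussian moments -/

lemma mp_rows {ι α β : Type*} [Fintype ι] [Fintype α] [Fintype β] (f : (α → ℝ) → β → ℝ)
    (hf : MeasurePreserving f (gv α) (gv β)) :
    MeasurePreserving (fun (A : ι → α → ℝ) i => f (A i)) (gm ι α) (gm ι β) :=
  measurePreserving_pi _ _ fun _ => hf

instance : NullSingletonClass (gaussianReal 0 1) := nullSingletonClass_gaussianReal one_ne_zero

lemma measurable_det {ι : Type*} [Fintype ι] [DecidableEq ι] :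
    Measurable fun A : ι → ι → ℝ => (Matrix.of A).det := by
  have : Continuous fun A : ι → ι → ℝ => (Matrix.of A).det := by
    refine Continuous.matrix_det ?_
    exact continuous_id
  exact this.measurable

/-- A Gaussian matrix is almost surely invertible: given the other entries, the determinant is
affine in the corner entry, with slope the complementary minor, nonzero by induction. -/
lemma det_null (k : ℕ) : gm (Fin k) (Fin k) {A | (Matrix.of A).det = 0} = 0 := by
  induction k with
  | zero => simp
  | succ k ih =>
    have hms : MeasurableSet {A : Fin (k+1) → Fin (k+1) → ℝ | (Matrix.of A).det = 0} :=
      measurable_det (measurableSet_singleton 0)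
    rw [← lintegral_indicator_one hms, lintegral_cons _ _ _ (measurable_one.indicator hms)]
    have hmp : MeasurePreserving (fun (R : Fin k → Fin (k+1) → ℝ) i j => R i (Fin.succ j))
        (gm (Fin k) (Fin (k+1))) (gm (Fin k) (Fin k)) :=
      mp_rows _ (mp_precomp Fin.succ (Fin.succ_injective k))
    have hae : ∀ᵐ R ∂(gm (Fin k) (Fin (k+1))),
        (Matrix.of fun (i j : Fin k) => R i j.succ).det ≠ 0 :=
      hmp.quasiMeasurePreserving.ae (p := fun A => (Matrix.of A).det ≠ 0) (by
        rw [ae_iff]; simpa using ih)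
    refine (lintegral_congr_ae (g := fun _ => 0) ?_).trans lintegral_zero
    filter_upwards [hae] with R hR
    have hc : Measurable fun a : Fin (k+1) → ℝ =>
        (Fin.cons a R : Fin (k+1) → Fin (k+1) → ℝ) := by
      refine measurable_pi_lambda _ fun i => ?_
      refine Fin.cases ?_ (fun j => ?_) i
      · exact measurable_id
      · simp
    rw [lintegral_cons]
    · refine (lintegral_congr (g := fun _ => 0) fun y => ?_).trans lintegral_zero
      have hsub : ∀ a : ℝ, (Matrix.of (Fin.cons (Fin.cons a y) R : Fin (k+1) → Fin (k+1) → ℝ)).det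
          = a * (Matrix.of fun (i j : Fin k) => R i j.succ).det
            + (Matrix.of (Fin.cons (Fin.cons 0 y) R : Fin (k+1) → Fin (k+1) → ℝ)).det := by
        intro a
        rw [Matrix.det_succ_row_zero, Matrix.det_succ_row_zero, Fin.sum_univ_succ,
          Fin.sum_univ_succ]
        simp [Matrix.submatrix]
      have hnull : gaussianReal 0 1 {-(Matrix.of (Fin.cons (Fin.cons 0 y) R :
          Fin (k+1) → Fin (k+1) → ℝ)).det / (Matrix.of fun (i j : Fin k) => R i j.succ).det} = 0 :=
        measure_singleton _
      refine (lintegral_congr_ae (g := fun _ => 0) ?_).trans lintegral_zero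
      filter_upwards [measure_eq_zero_iff_ae_notMem.mp hnull] with a ha
      refine Set.indicator_of_notMem (fun h => ha ?_) _
      rw [Set.mem_ofPred_eq, hsub] at h
      rw [Set.mem_singleton_iff, eq_div_iff hR]
      linarith
    · exact (measurable_one.indicator hms).comp hc

lemma gauss_density_zero (x : ℝ) :
    gaussianPDFReal 0 1 x = (√(2 * Real.pi))⁻¹ * Real.exp (-(1/2) * x ^ 2) := by
  rw [gaussianPDFReal_def]; simp; left; ring

lemma lintegral_gauss {f : ℝ → ℝ} (hf : 0 ≤ f) (hi : Integrable f (gaussianReal 0 1)) :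
    ∫⁻ x, ENNReal.ofReal (f x) ∂gaussianReal 0 1
      = ENNReal.ofReal ((√(2 * Real.pi))⁻¹ * ∫ x, Real.exp (-(1/2) * x ^ 2) * f x) := by
  rw [← ofReal_integral_eq_lintegral_ofReal hi (Filter.Eventually.of_forall hf),
    integral_gaussianReal_eq_integral_smul one_ne_zero, ← integral_const_mul]
  congr 2
  funext x
  rw [gauss_density_zero, smul_eq_mul, mul_assoc]

lemma gauss_exp : ∫⁻ x, ENNReal.ofReal (Real.exp (x ^ 2 / 3)) ∂gaussianReal 0 1
    = ENNReal.ofReal (√3) := by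
  have h2 : (fun x : ℝ => Real.exp (-(1/2) * x ^ 2) * Real.exp (x ^ 2 / 3))
      = fun x => Real.exp (-(1/6) * x ^ 2) := by
    funext x; rw [← Real.exp_add]; ring_nf
  have hi : Integrable (fun x : ℝ => Real.exp (x ^ 2 / 3)) (gaussianReal 0 1) := by
    rw [gaussianReal_of_var_ne_zero _ one_ne_zero,
      integrable_withDensity_iff_integrable_smul' (measurable_gaussianPDF 0 1)
      (by simp [gaussianPDF_lt_top])]
    simp only [toReal_gaussianPDF, gauss_density_zero, smul_eq_mul, mul_assoc]
    refine Integrable.const_mul ?_ _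
    rw [h2]
    exact integrable_exp_neg_mul_sq (by norm_num)
  rw [lintegral_gauss (fun x => (Real.exp_pos _).le) hi, h2, integral_gaussian]
  congr 1
  rw [inv_mul_eq_div, ← Real.sqrt_div' _ (by positivity)]
  congr 1
  field_simp
  norm_num

/-- Both Stirling bounds applied to `(2m)! = 2ᵐ m! (2m - 1)‼`. -/
lemma doubleFactorial_lb (m : ℕ) (hm : m ≠ 0) :
    (2 * m / Real.exp 1) ^ m ≤ (Nat.doubleFactorial (2 * m - 1) : ℝ) := by
  have h1 := Stirling.le_factorial_stirling (2 * m)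
  have h2 : Stirling.stirlingSeq m ≤ Real.exp 1 / √2 := by
    rw [← Stirling.stirlingSeq_one]
    have := Stirling.stirlingSeq'_antitone (Nat.zero_le (m - 1))
    simpa [Nat.sub_add_cancel (Nat.one_le_iff_ne_zero.mpr hm)] using this
  rw [Stirling.stirlingSeq, div_le_iff₀ (by positivity)] at h2
  have hf : ((2 * m).factorial : ℝ)
      = 2 ^ m * m.factorial * (Nat.doubleFactorial (2 * m - 1) : ℝ) := by
    obtain ⟨n, rfl⟩ := Nat.exists_eq_succ_of_ne_zero hm
    have := Nat.factorial_eq_mul_doubleFactorial (2 * n + 1)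
    rw [show 2 * n + 1 + 1 = 2 * (n + 1) by ring, Nat.doubleFactorial_two_mul] at this
    rw [show 2 * n.succ - 1 = 2 * n + 1 by omega]
    exact_mod_cast this
  rw [hf] at h1
  push_cast at h1
  have hm0 : (0:ℝ) < m := by positivity
  set D : ℝ := (Nat.doubleFactorial (2 * m - 1) : ℝ)
  set X : ℝ := ((m : ℝ) / Real.exp 1) ^ m with hX
  have hX0 : 0 < X := by positivity
  have e1 : (2 * (m:ℝ) / Real.exp 1) ^ m = 2 ^ m * X := by rw [hX, ← mul_pow]; ring_nf
  have e2 : (2 * (m:ℝ) / Real.exp 1) ^ (2 * m) = (2 ^ m * X) * (2 ^ m * X) := by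
    rw [← e1, ← pow_add]; ring_nf
  rw [e2] at h1
  rw [e1]
  have e3 : Real.exp 1 / √2 * (√(2 * m) * X) = Real.exp 1 * √m * X := by
    rw [Real.sqrt_mul (by norm_num)]; field_simp
  rw [e3] at h2
  have hpi : Real.exp 1 * √m ≤ √(2 * Real.pi * (2 * m)) := by
    refine Real.le_sqrt_of_sq_le ?_
    rw [mul_pow, Real.sq_sqrt hm0.le]
    have := Real.exp_one_lt_d9
    have := Real.pi_gt_three
    have := Real.exp_pos 1
    have : Real.exp 1 ^ 2 ≤ 9 := by nlinarith
    nlinarith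
  have hY : 0 < 2 ^ m * X := by positivity
  have hc : (Real.exp 1 * √m * X) * 2 ^ m * (2 ^ m * X)
      ≤ (Real.exp 1 * √m * X) * 2 ^ m * D := by
    calc _ = Real.exp 1 * √m * (2 ^ m * X * (2 ^ m * X)) := by ring
      _ ≤ √(2 * Real.pi * (2 * m)) * (2 ^ m * X * (2 ^ m * X)) := by gcongr
      _ ≤ _ := h1
      _ = (m.factorial : ℝ) * 2 ^ m * D := by ring
      _ ≤ _ := by gcongr
  exact le_of_mul_le_mul_left hc (by positivity)

/-- Lower bound on the Gaussian moment of order `2m`, whose exact value is `(2m - 1)‼`. -/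
lemma gauss_moment (m : ℕ) (hm : m ≠ 0) :
    ENNReal.ofReal ((2 * m / Real.exp 1) ^ m)
      ≤ ∫⁻ x, ENNReal.ofReal (x ^ (2 * m)) ∂gaussianReal 0 1 := by
  have hi : Integrable (fun x : ℝ => x ^ (2 * m)) (gaussianReal 0 1) := by
    have := (memLp_id_gaussianReal' (μ := 0) (v := 1) ((2 * m : ℕ) : ENNReal) (ENNReal.natCast_ne_top _)).integrable_norm_pow
      (by simpa using hm)
    simpa [pow_mul] using this
  rw [lintegral_gauss (fun x => by rw [pow_mul]; positivity) hi]
  refine ENNReal.ofReal_le_ofReal ((doubleFactorial_lb m hm).trans_eq ?_)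
  have h1 : ∫ x : ℝ, Real.exp (-(1/2) * x ^ 2) * x ^ (2 * m)
      = 2 * ∫ x in Set.Ioi (0:ℝ), x ^ ((2 * m : ℕ) : ℝ) * Real.exp (-(1/2) * x ^ (2:ℝ)) := by
    rw [← integral_comp_abs (f := fun x : ℝ => x ^ ((2 * m : ℕ) : ℝ) * Real.exp (-(1/2) * x ^ (2:ℝ)))]
    congr 1
    funext x
    rw [Real.rpow_natCast, pow_mul, Real.rpow_two, mul_comm, pow_mul, sq_abs]
  rw [h1, integral_rpow_mul_exp_neg_mul_rpow (by norm_num) (by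
    have : (0:ℝ) ≤ ((2 * m : ℕ) : ℝ) := Nat.cast_nonneg _
    linarith) (by norm_num)]
  have h2 : (((2 * m : ℕ) : ℝ) + 1) / 2 = m + 1 / 2 := by push_cast; ring
  rw [neg_div, h2, Real.Gamma_nat_add_half]
  rw [Real.rpow_neg (by norm_num), Real.rpow_add (by norm_num), Real.rpow_natCast,
    ← Real.sqrt_eq_rpow, Real.sqrt_mul (by norm_num), one_div, Real.sqrt_inv]
  have : √Real.pi ≠ 0 := by positivity
  have : √(2:ℝ) ≠ 0 := by positivity
  field_simp
  rw [one_div, inv_pow]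
  field_simp

/-! ### The mean norm of a Gaussian matrix -/

section Moments

open scoped Matrix

variable {ι κ : Type*} [Fintype ι] [Fintype κ]

/-- The projection of a Gaussian vector on a unit vector is a standard Gaussian variable. -/
lemma mp_dot [DecidableEq ι] [Nonempty ι] (z : ι → ℝ) (hz : z ⬝ᵥ z = 1) :
    MeasurePreserving (fun x : ι → ℝ => z ⬝ᵥ x) (gv ι) (gaussianReal 0 1) := by
  let i : ι := Classical.arbitrary ι
  obtain ⟨Q, hQ, hi⟩ := exists_rot i z hz
  have := (measurePreserving_eval (fun _ : ι => gaussianReal 0 1) i).comp (mp_rot Q hQ)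
  have heq : (fun x : ι → ℝ => z ⬝ᵥ x) = Function.eval i ∘ fun x => Q.mulVec x := by
    funext x
    simp only [Function.comp_apply, Function.eval, Matrix.mulVec, hi]
  rw [heq]
  exact this

lemma mp_mulVec_unit [DecidableEq κ] [Nonempty κ] (z : κ → ℝ) (hz : z ⬝ᵥ z = 1) :
    MeasurePreserving (fun (A : ι → κ → ℝ) => Matrix.of A *ᵥ z) (gm ι κ) (gv ι) := by
  have := measurePreserving_pi (fun _ : ι => gv κ) (fun _ : ι => gaussianReal 0 1)
    (f := fun _ x => z ⬝ᵥ x) (fun _ => mp_dot z hz)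
  convert this using 3 with A i
  exact dotProduct_comm _ _

lemma measurable_en : Measurable (en : (ι → ℝ) → ℝ) := continuous_en.measurable

lemma en_exp : ∫⁻ h, ENNReal.ofReal (Real.exp (en h ^ 2 / 3)) ∂gv ι
    = ENNReal.ofReal (√3 ^ Fintype.card ι) := by
  have : ∀ h : ι → ℝ, ENNReal.ofReal (Real.exp (en h ^ 2 / 3))
      = ∏ i, ENNReal.ofReal (Real.exp (h i ^ 2 / 3)) := by
    intro h
    rw [en_sq', Finset.sum_div, Real.exp_sum, ENNReal.ofReal_prod_of_nonneg]
    intros; positivity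
  simp_rw [this]
  have hind := iIndepFun_pi (μ := fun _ : ι => gaussianReal 0 1)
    (X := fun _ x => ENNReal.ofReal (Real.exp (x ^ 2 / 3)))
    (fun _ => Measurable.aemeasurable (by fun_prop))
  rw [lintegral_prod_eq_prod_lintegral_of_indepFun Finset.univ
    (fun i (h : ι → ℝ) => ENNReal.ofReal (Real.exp (h i ^ 2 / 3))) hind (by fun_prop)]
  have : ∀ i : ι, ∫⁻ h, ENNReal.ofReal (Real.exp (h i ^ 2 / 3)) ∂gv ι = ENNReal.ofReal (√3) := by
    intro i
    rw [(measurePreserving_eval (fun _ : ι => gaussianReal 0 1) i).lintegral_comp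
      (f := fun x => ENNReal.ofReal (Real.exp (x ^ 2 / 3))) (by fun_prop), gauss_exp]
  simp_rw [this]
  simp [ENNReal.ofReal_pow]

/-- Chernoff bound with exponential weight `exp (|u|² / 3)`. -/
lemma en_tail (L : ℝ) (hL : 0 ≤ L) : gv ι {u | L < en u}
    ≤ ENNReal.ofReal (√3 ^ Fintype.card ι * Real.exp (-(L ^ 2 / 3))) := by
  have h1 : {u : ι → ℝ | L < en u} ⊆ {u | ENNReal.ofReal (Real.exp (L ^ 2 / 3))
      ≤ ENNReal.ofReal (Real.exp (en u ^ 2 / 3))} := by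
    intro u hu
    have hu : L < en u := hu
    refine ENNReal.ofReal_le_ofReal (Real.exp_le_exp.mpr ?_)
    gcongr
  refine (measure_mono h1).trans ?_
  have h2 := mul_meas_ge_le_lintegral (μ := gv ι)
    (f := fun u => ENNReal.ofReal (Real.exp (en u ^ 2 / 3)))
    (by have := measurable_en (ι := ι); fun_prop) (ENNReal.ofReal (Real.exp (L ^ 2 / 3)))
  rw [en_exp, mul_comm, ← ENNReal.le_div_iff_mul_le
    (Or.inl (by simp [Real.exp_pos])) (Or.inl ENNReal.ofReal_ne_top)] at h2
  rw [Real.exp_neg, ← div_eq_mul_inv, ENNReal.ofReal_div_of_pos (Real.exp_pos _)]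
  exact h2

lemma pow_le_exp (m : ℕ) (hm : m ≠ 0) (y : ℝ) (hy : 0 ≤ y) :
    y ^ m ≤ (3 * m / Real.exp 1) ^ m * Real.exp (y / 3) := by
  have hm0 : (0:ℝ) < m := by positivity
  have h1 : y / (3 * m) ≤ Real.exp (y / (3 * m) - 1) := by
    have := Real.add_one_le_exp (y / (3 * m) - 1); linarith
  have h2 : y ≤ 3 * m / Real.exp 1 * Real.exp (y / (3 * m)) := by
    rw [Real.exp_sub, div_le_div_iff₀ (by positivity) (by positivity)] at h1
    rw [div_mul_eq_mul_div, le_div_iff₀ (by positivity)]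
    linarith
  calc y ^ m ≤ (3 * m / Real.exp 1 * Real.exp (y / (3 * m))) ^ m := by gcongr
    _ = _ := by rw [mul_pow, ← Real.exp_nat_mul]; congr 2; field_simp

lemma en_moment (m : ℕ) (hm : m ≠ 0) : ∫⁻ h, ENNReal.ofReal (en h ^ (2 * m)) ∂gv ι
    ≤ ENNReal.ofReal ((3 * m / Real.exp 1) ^ m * √3 ^ Fintype.card ι) := by
  rw [ENNReal.ofReal_mul (by positivity), ← en_exp, ← lintegral_const_mul]
  · refine lintegral_mono fun h => ?_
    rw [← ENNReal.ofReal_mul (by positivity), pow_mul]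
    exact ENNReal.ofReal_le_ofReal (pow_le_exp m hm _ (sq_nonneg _))
  · have := measurable_en (ι := ι); fun_prop

lemma lintegral_mulVec [DecidableEq κ] [Nonempty κ] (m : ℕ) (hm : m ≠ 0) (x : κ → ℝ) :
    ∫⁻ A, ENNReal.ofReal (en (Matrix.of A *ᵥ x) ^ (2 * m)) ∂gm ι κ
      = ENNReal.ofReal (en x ^ (2 * m)) * ∫⁻ h, ENNReal.ofReal (en h ^ (2 * m)) ∂gv ι := by
  have hme : Measurable fun h : ι → ℝ => ENNReal.ofReal (en h ^ (2 * m)) := by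
    have := measurable_en (ι := ι); fun_prop
  rcases eq_or_ne x 0 with rfl | hx
  · have h0 : en (0 : κ → ℝ) = 0 := by simp [en]
    have h1 : en (0 : ι → ℝ) = 0 := by simp [en]
    simp [h0, h1, hm]
  have hx0 := en_pos hx
  have hz : ((en x)⁻¹ • x) ⬝ᵥ ((en x)⁻¹ • x) = 1 := by
    rw [← en_sq, en_smul, abs_of_pos (inv_pos.mpr hx0), inv_mul_cancel₀ hx0.ne', one_pow]
  rw [← (mp_mulVec_unit (ι := ι) _ hz).lintegral_comp hme, ← lintegral_const_mul]
  · refine lintegral_congr fun A => ?_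
    rw [← ENNReal.ofReal_mul (by have := en_nonneg x; positivity), ← mul_pow, Matrix.mulVec_smul,
      en_smul, abs_of_pos (inv_pos.mpr hx0), mul_inv_cancel_left₀ hx0.ne']
  · exact hme.comp (mp_mulVec_unit _ hz).measurable

/-- Comparison of moments. With `x` a Gaussian vector independent of `A`, the moment of `|A x|` is at
least that of `‖A‖ |⟨z, x⟩|`, where `z` is the top right singular vector of `A`, and it equals the
product of the moments of two independent Gaussian vectors. -/
lemma norm_moment_aux [DecidableEq ι] [Nonempty ι] (m : ℕ) (hm : m ≠ 0) :
    (∫⁻ A, ENNReal.ofReal (l2OpNorm (Matrix.of A) ^ (2 * m)) ∂gm ι ι)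
        * ∫⁻ g, ENNReal.ofReal (g ^ (2 * m)) ∂gaussianReal 0 1
      ≤ (∫⁻ h, ENNReal.ofReal (en h ^ (2 * m)) ∂gv ι) ^ 2 := by
  have hN : Measurable fun A : ι → ι → ℝ => l2OpNorm (Matrix.of A) := continuous_on_norm.measurable
  have hme : Measurable fun h : ι → ℝ => ENNReal.ofReal (en h ^ (2 * m)) := by
    have := measurable_en (ι := ι); fun_prop
  have hj : Measurable fun p : (ι → ι → ℝ) × (ι → ℝ) =>
      ENNReal.ofReal (en (Matrix.of p.1 *ᵥ p.2) ^ (2 * m)) := by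
    refine hme.comp (Continuous.measurable ?_)
    exact Continuous.matrix_mulVec continuous_fst continuous_snd
  calc _ = ∫⁻ A, ENNReal.ofReal (l2OpNorm (Matrix.of A) ^ (2 * m)) *
        ∫⁻ g, ENNReal.ofReal (g ^ (2 * m)) ∂gaussianReal 0 1 ∂gm ι ι := by
        rw [lintegral_mul_const]; fun_prop
    _ ≤ ∫⁻ A, ∫⁻ x, ENNReal.ofReal (en (Matrix.of A *ᵥ x) ^ (2 * m)) ∂gv ι ∂gm ι ι := by
        refine lintegral_mono fun A => ?_
        obtain ⟨z, hz, hzA⟩ := exists_lower (Matrix.of A)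
        rw [← (mp_dot z hz).lintegral_comp (by fun_prop), ← lintegral_const_mul]
        · refine lintegral_mono fun x => ?_
          rw [← ENNReal.ofReal_mul (by have := on_nonneg (Matrix.of A); positivity)]
          refine ENNReal.ofReal_le_ofReal ?_
          have h1 := pow_le_pow_left₀ (mul_nonneg (on_nonneg _) (abs_nonneg _)) (hzA x) (2 * m)
          rwa [mul_pow, (even_two_mul m).pow_abs] at h1
        · have := (mp_dot z hz).measurable
          fun_prop
    _ = ∫⁻ x, ∫⁻ A, ENNReal.ofReal (en (Matrix.of A *ᵥ x) ^ (2 * m)) ∂gm ι ι ∂gv ι :=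
        lintegral_lintegral_swap hj.aemeasurable
    _ = _ := by
        simp_rw [lintegral_mulVec m hm]
        rw [lintegral_mul_const _ hme, sq]

lemma norm_moment (m : ℕ) (hm : m ≠ 0) :
    ∫⁻ A, ENNReal.ofReal (l2OpNorm (Matrix.of A) ^ (2 * m)) ∂gm (Fin m) (Fin m)
      ≤ ENNReal.ofReal ((81 * m / 16) ^ m) := by
  have : Nonempty (Fin m) := ⟨⟨0, Nat.pos_of_ne_zero hm⟩⟩
  have hm0 : (0:ℝ) < m := by positivity
  have he := Real.exp_pos 1
  have hG : 0 < (2 * m / Real.exp 1) ^ m := by positivity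
  have h1 : (∫⁻ A, ENNReal.ofReal (l2OpNorm (Matrix.of A) ^ (2 * m)) ∂gm (Fin m) (Fin m))
      * ENNReal.ofReal ((2 * m / Real.exp 1) ^ m)
      ≤ ENNReal.ofReal (((3 * m / Real.exp 1) ^ m * √3 ^ m) ^ 2) := by
    refine (mul_le_mul_right (gauss_moment m hm) _).trans ((norm_moment_aux m hm).trans ?_)
    rw [ENNReal.ofReal_pow (by positivity)]
    have := en_moment (ι := Fin m) m hm
    rw [Fintype.card_fin] at this
    gcongr
  rw [← ENNReal.le_div_iff_mul_le (Or.inl (by simpa using hG)) (Or.inl ENNReal.ofReal_ne_top),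
    ← ENNReal.ofReal_div_of_pos hG] at h1
  refine h1.trans (ENNReal.ofReal_le_ofReal ?_)
  rw [← mul_pow, ← pow_mul, mul_comm m 2, pow_mul, ← div_pow]
  refine pow_le_pow_left₀ (by positivity) ?_ _
  rw [mul_pow, Real.sq_sqrt (by norm_num), div_le_iff₀ (by positivity)]
  have h2 := Real.exp_one_gt_d9
  have : (3 * m / Real.exp 1) ^ 2 * 3 = 27 * m ^ 2 / Real.exp 1 / Real.exp 1 := by
    field_simp; ring
  rw [this]
  have : 81 * (m:ℝ) / 16 * (2 * m / Real.exp 1) = (81 * m ^ 2 / 8) / Real.exp 1 := by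
    field_simp; ring
  rw [this]
  refine div_le_div_of_nonneg_right ?_ he.le
  rw [div_le_iff₀ he]
  nlinarith [sq_nonneg (m:ℝ), mul_le_mul_of_nonneg_left h2.le (sq_nonneg (m:ℝ))]

/-- From the moment of order `2m` to the mean, by Bernoulli's inequality in place of Jensen's. -/
lemma norm_mean (m : ℕ) (hm : m ≠ 0) :
    ∫⁻ A, ENNReal.ofReal (l2OpNorm (Matrix.of A)) ∂gm (Fin m) (Fin m)
      ≤ ENNReal.ofReal (9 / 4 * √m) := by
  have hm0 : (0:ℝ) < m := by positivity
  set a : ℝ := 9 / 4 * √m with ha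
  have ha0 : 0 < a := by positivity
  have ha2 : a ^ (2 * m) = (81 * m / 16) ^ m := by
    rw [pow_mul, ha, mul_pow, Real.sq_sqrt hm0.le]; ring
  have hpt : ∀ A : Fin m → Fin m → ℝ, ENNReal.ofReal (l2OpNorm (Matrix.of A))
      ≤ ENNReal.ofReal (a * (2 * m - 1) / (2 * m))
        + ENNReal.ofReal (a / (2 * m * a ^ (2 * m))) *
          ENNReal.ofReal (l2OpNorm (Matrix.of A) ^ (2 * m)) := by
    intro A
    have hN := on_nonneg (Matrix.of A)
    set N := l2OpNorm (Matrix.of A)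
    have h1m : (1:ℝ) ≤ m := by exact_mod_cast Nat.one_le_iff_ne_zero.mpr hm
    have h2m : (0:ℝ) ≤ 2 * m - 1 := by linarith
    rw [← ENNReal.ofReal_mul (by positivity), ← ENNReal.ofReal_add (by positivity) (by positivity)]
    refine ENNReal.ofReal_le_ofReal ?_
    have hb := one_add_mul_le_pow (a := N / a - 1) (by have : 0 ≤ N / a := by positivity
                                                       linarith) (2 * m)
    rw [add_sub_cancel, div_pow] at hb
    push_cast at hb
    have : N = a / (2 * m) * (2 * m * (N / a)) := by field_simp
    have h3 : a * (2 * m - 1) / (2 * m) + a / (2 * m * a ^ (2 * m)) * N ^ (2 * m)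
        = a / (2 * m) * ((2 * m - 1) + N ^ (2 * m) / a ^ (2 * m)) := by
      field_simp
    rw [h3]
    nth_rw 1 [this]
    gcongr
    linarith
  have hNm : Measurable fun A : Fin m → Fin m → ℝ => l2OpNorm (Matrix.of A) :=
    continuous_on_norm.measurable
  refine (lintegral_mono hpt).trans ?_
  rw [lintegral_add_left (by fun_prop), lintegral_const, measure_univ, mul_one,
    lintegral_const_mul _ (by fun_prop)]
  refine (add_le_add_right (mul_le_mul_right (norm_moment m hm) _) _).trans ?_
  have h1m : (1:ℝ) ≤ m := by exact_mod_cast Nat.one_le_iff_ne_zero.mpr hm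
  have h2m : (0:ℝ) ≤ 2 * m - 1 := by linarith
  rw [← ha2, ← ENNReal.ofReal_mul (by positivity), ← ENNReal.ofReal_add (by positivity) (by positivity)]
  refine ENNReal.ofReal_le_ofReal (le_of_eq ?_)
  field_simp
  ring

lemma gauss_sq : ∫⁻ x, ENNReal.ofReal (x ^ 2) ∂gaussianReal 0 1 = 1 := by
  have hi : Integrable (fun x : ℝ => x ^ 2) (gaussianReal 0 1) :=
    (memLp_id_gaussianReal' (μ := 0) (v := 1) 2 (by simp)).integrable_sq
  rw [← ofReal_integral_eq_lintegral_ofReal hi (Filter.Eventually.of_forall fun x => sq_nonneg x)]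
  have h := variance_fun_id_gaussianReal (μ := 0) (v := 1)
  rw [variance_eq_integral (by fun_prop), integral_id_gaussianReal] at h
  simp only [sub_zero] at h
  rw [h]; simp

/-- `|u| ≤ √m / 2 + |u|² / (2 √m)` pointwise, and `|u|²` has mean `m`. -/
lemma en_mean (m : ℕ) (hm : m ≠ 0) :
    ∫⁻ u, ENNReal.ofReal (en u) ∂gv (Fin m) ≤ ENNReal.ofReal (√m) := by
  have hm0 : (0:ℝ) < m := by positivity
  have hs : 0 < √(m:ℝ) := by positivity
  have hss := Real.mul_self_sqrt hm0.le
  have hpt : ∀ u : Fin m → ℝ, ENNReal.ofReal (en u) ≤ ENNReal.ofReal (√m / 2)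
      + ENNReal.ofReal (1 / (2 * √m)) * ∑ i, ENNReal.ofReal (u i ^ 2) := by
    intro u
    rw [← ENNReal.ofReal_sum_of_nonneg (fun i _ => sq_nonneg _), ← en_sq',
      ← ENNReal.ofReal_mul (by positivity), ← ENNReal.ofReal_add (by positivity) (by positivity)]
    refine ENNReal.ofReal_le_ofReal ?_
    have : √(m:ℝ) / 2 + 1 / (2 * √m) * en u ^ 2 - en u = (√m - en u) ^ 2 / (2 * √m) := by
      field_simp; ring
    have h2 : 0 ≤ (√m - en u) ^ 2 / (2 * √(m:ℝ)) := by positivity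
    linarith
  refine (lintegral_mono hpt).trans ?_
  rw [lintegral_add_left (by fun_prop), lintegral_const, measure_univ, mul_one,
    lintegral_const_mul _ (by fun_prop), lintegral_finsetSum _ (by fun_prop)]
  have : ∀ i : Fin m, ∫⁻ u, ENNReal.ofReal (u i ^ 2) ∂gv (Fin m) = 1 := by
    intro i
    rw [(measurePreserving_eval (fun _ : Fin m => gaussianReal 0 1) i).lintegral_comp
      (f := fun x => ENNReal.ofReal (x ^ 2)) (by fun_prop), gauss_sq]
  simp_rw [this]
  rw [Finset.sum_const, Finset.card_univ, Fintype.card_fin, nsmul_eq_mul, mul_one,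
    ← ENNReal.ofReal_natCast, ← ENNReal.ofReal_mul (by positivity),
    ← ENNReal.ofReal_add (by positivity) (by positivity)]
  refine ENNReal.ofReal_le_ofReal (le_of_eq ?_)
  field_simp
  linarith [Real.sq_sqrt hm0.le]

end Moments

/-! ### The inverse of a Gaussian matrix in a fixed direction -/

section Core

open scoped Matrix

lemma measurable_en_inv {ι : Type*} [Fintype ι] [DecidableEq ι] :
    Measurable fun p : (ι → ι → ℝ) × (ι → ℝ) => en ((Matrix.of p.1)⁻¹ *ᵥ p.2) := by
  have h : ∀ p : (ι → ι → ℝ) × (ι → ℝ), en ((Matrix.of p.1)⁻¹ *ᵥ p.2)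
      = |((Matrix.of p.1).det)⁻¹| * en ((Matrix.of p.1).adjugate *ᵥ p.2) := by
    intro p
    rw [Matrix.inv_def, Ring.inverse_eq_inv', Matrix.smul_mulVec, en_smul]
  simp_rw [h]
  have h1 : Continuous fun p : (ι → ι → ℝ) × (ι → ℝ) => (Matrix.of p.1).adjugate *ᵥ p.2 := by
    refine Continuous.matrix_mulVec (Continuous.matrix_adjugate ?_) continuous_snd
    exact continuous_fst
  have h2 := (continuous_en.comp h1).measurable
  have h3 : Measurable fun p : (ι → ι → ℝ) × (ι → ℝ) => (Matrix.of p.1).det :=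
    measurable_det.comp measurable_fst
  exact (measurable_norm.comp h3.inv).mul h2

/-- The inverse is the adjugate divided by the determinant, also for the value `0` at singular
matrices. -/
lemma measurable_norm_inv {ι : Type*} [Fintype ι] [DecidableEq ι] :
    Measurable fun A : ι → ι → ℝ => l2OpNorm (Matrix.of A)⁻¹ := by
  have h : ∀ A : ι → ι → ℝ, l2OpNorm (Matrix.of A)⁻¹
      = |((Matrix.of A).det)⁻¹| * l2OpNorm (Matrix.of A).adjugate := by
    intro A
    rw [Matrix.inv_def, Ring.inverse_eq_inv', l2OpNorm, map_smul, map_smul, norm_smul]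
    rfl
  simp_rw [h]
  have h1 : Continuous fun A : ι → ι → ℝ => (Matrix.of A).adjugate := by
    refine Continuous.matrix_adjugate ?_
    exact continuous_id
  have h2 : Measurable fun A : ι → ι → ℝ => l2OpNorm (Matrix.of A).adjugate :=
    (continuous_on_norm.comp h1).measurable
  exact (measurable_norm.comp measurable_det.inv).mul h2

lemma measurableSet_core {ι : Type*} [Fintype ι] [DecidableEq ι] (u : ι → ℝ) (τ : ℝ) :
    MeasurableSet {A : ι → ι → ℝ | (Matrix.of A).det ≠ 0 ∧
        τ < l2OpNorm (Matrix.of A) * en ((Matrix.of A)⁻¹ *ᵥ u)} := by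
  have h0 : Measurable fun A : ι → ι → ℝ => (A, u) := measurable_id.prodMk measurable_const
  have h1 := (measurable_en_inv (ι := ι)).comp h0
  have h2 : Measurable fun A : ι → ι → ℝ => l2OpNorm (Matrix.of A) :=
    continuous_on_norm.measurable
  exact (measurable_det (measurableSet_singleton 0)).compl.inter
    (measurableSet_lt measurable_const (h2.mul h1))

lemma small_ball (r : ℝ) :
    gaussianReal 0 1 {a | |a| ≤ r} ≤ ENNReal.ofReal (√(2 / Real.pi) * r) := by
  have hs : {a : ℝ | |a| ≤ r} = Set.Icc (-r) r := by ext a; simp [abs_le]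
  rw [hs, gaussianReal_apply _ one_ne_zero]
  calc ∫⁻ x in Set.Icc (-r) r, gaussianPDF 0 1 x
      ≤ ∫⁻ x in Set.Icc (-r) r, ENNReal.ofReal (√(2 * Real.pi))⁻¹ := by
        refine lintegral_mono fun x => ?_
        rw [gaussianPDF, gauss_density_zero]
        refine ENNReal.ofReal_le_ofReal (mul_le_of_le_one_right (by positivity) ?_)
        rw [Real.exp_le_one_iff]
        nlinarith [sq_nonneg x]
    _ = ENNReal.ofReal (√(2 / Real.pi) * r) := by
        rw [lintegral_const, Measure.restrict_apply_univ, Real.volume_Icc,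
          ← ENNReal.ofReal_mul (by positivity)]
        congr 1
        have h2 : √2 * √2 = 2 := Real.mul_self_sqrt (by norm_num)
        have h3 : √(2:ℝ) ≠ 0 := by positivity
        have h4 : √Real.pi ≠ 0 := by positivity
        rw [Real.sqrt_mul (by norm_num), Real.sqrt_div (by norm_num)]
        field_simp
        linear_combination (-r) * h2

lemma colZero_cons {k : ℕ} (a b : ℝ) (y : Fin k → ℝ) (T : Fin k → Fin (k+1) → ℝ) :
    Matrix.of (Fin.cons (Fin.cons a y) T : Fin (k+1) → Fin (k+1) → ℝ) * colZero (k := k)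
      = Matrix.of (Fin.cons (Fin.cons b y) T : Fin (k+1) → Fin (k+1) → ℝ) * colZero (k := k) := by
  ext i j
  rw [colZero, Matrix.mul_diagonal, Matrix.mul_diagonal]
  refine Fin.cases ?_ (fun j => ?_) j
  · simp
  · refine Fin.cases ?_ (fun i => ?_) i <;> simp

/-- There is a unit vector orthogonal to `k` given vectors of dimension `k + 1`. -/
lemma exists_normal {k : ℕ} (R : Fin k → Fin (k+1) → ℝ) :
    ∃ n : Fin (k+1) → ℝ, n ⬝ᵥ n = 1 ∧ ∀ i, R i ⬝ᵥ n = 0 := by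
  have h : LinearMap.ker (Matrix.of R).mulVecLin ≠ ⊥ :=
    LinearMap.ker_ne_bot_of_finrank_lt (by simp)
  obtain ⟨x, hx, hx0⟩ := Submodule.exists_mem_ne_zero_of_ne_bot h
  have hxp := en_pos hx0
  refine ⟨(en x)⁻¹ • x, ?_, fun i => ?_⟩
  · rw [← en_sq, en_smul, abs_of_pos (inv_pos.mpr hxp), inv_mul_cancel₀ hxp.ne', one_pow]
  · have : (Matrix.of R *ᵥ x) i = 0 := by
      have h2 : Matrix.of R *ᵥ x = 0 := by simpa using hx
      rw [h2]; rfl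
    rw [dotProduct_smul]
    have h3 : R i ⬝ᵥ x = 0 := this
    rw [h3, smul_zero]

lemma measurable_cons_left {k : ℕ} {α : Type*} [MeasurableSpace α] (R : Fin k → α) :
    Measurable fun a : α => (Fin.cons a R : Fin (k+1) → α) := by
  refine measurable_pi_lambda _ fun i => ?_
  refine Fin.cases ?_ (fun j => ?_) i
  · exact measurable_id
  · simp

/-- Small-ball estimate for the first coordinate of the first row, at a random scale independent
of that coordinate. -/
lemma core_slab {k : ℕ} (T : Fin k → Fin (k+1) → ℝ) (s : ℝ) (hs : 0 < s) :
    gv (Fin (k+1)) {y | |y 0| ≤ l2OpNorm (Matrix.of (Fin.cons y T : Fin (k+1) → Fin (k+1) → ℝ)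
          * colZero) / s}
      ≤ ENNReal.ofReal (√(2 / Real.pi) / s) * ∫⁻ y, ENNReal.ofReal
          (l2OpNorm (Matrix.of (Fin.cons y T : Fin (k+1) → Fin (k+1) → ℝ))) ∂gv (Fin (k+1)) := by
  set N' : (Fin (k+1) → ℝ) → ℝ := fun y =>
    l2OpNorm (Matrix.of (Fin.cons y T : Fin (k+1) → Fin (k+1) → ℝ) * colZero (k := k)) with hN'
  have hN'm : Measurable N' := by
    have h1 : Continuous fun B : Fin (k+1) → Fin (k+1) → ℝ => Matrix.of B * colZero (k := k) := by
      refine Continuous.matrix_mul ?_ continuous_const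
      exact continuous_id
    exact (continuous_on_norm.comp h1).measurable.comp (measurable_cons_left T)
  have hS : MeasurableSet {y : Fin (k+1) → ℝ | |y 0| ≤ N' y / s} :=
    measurableSet_le (measurable_norm.comp (measurable_pi_apply 0)) (hN'm.div_const s)
  have hcons : ∀ (y : Fin k → ℝ) (a : ℝ), N' (Fin.cons a y) = N' (Fin.cons 0 y) :=
    fun y a => congrArg l2OpNorm (colZero_cons a 0 y T)
  rw [← lintegral_indicator_one hS, lintegral_cons _ _ _ (measurable_one.indicator hS)]
  calc _ ≤ ∫⁻ y, ∫⁻ a, ENNReal.ofReal (√(2 / Real.pi) / s) * ENNReal.ofReal (N' (Fin.cons a y))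
          ∂gaussianReal 0 1 ∂gv (Fin k) := by
        refine lintegral_mono fun y => ?_
        simp_rw [hcons y]
        rw [lintegral_const, measure_univ, mul_one, ← ENNReal.ofReal_mul (by positivity),
          div_mul_eq_mul_div, mul_div_assoc]
        refine le_trans (le_of_eq ?_) (small_ball _)
        have hm : MeasurableSet {a : ℝ | |a| ≤ N' (Fin.cons 0 y) / s} :=
          measurableSet_le measurable_norm measurable_const
        rw [← lintegral_indicator_one hm]
        refine lintegral_congr fun a => ?_
        simp [Set.indicator, hcons y]
    _ = ∫⁻ y, ENNReal.ofReal (√(2 / Real.pi) / s) * ENNReal.ofReal (N' y) ∂gv (Fin (k+1)) := by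
        rw [lintegral_cons _ _ _ (by fun_prop)]
    _ = ENNReal.ofReal (√(2 / Real.pi) / s) * ∫⁻ y, ENNReal.ofReal (N' y) ∂gv (Fin (k+1)) := by
        rw [lintegral_const_mul _ (by fun_prop)]
    _ ≤ _ := by
        gcongr
        exact on_colZero_le _

/-- Condition on all rows but the first, and let `n` be a unit normal to them. If `y₀` is the
component of the first row along `n`, then `A n = y₀ e₀`, so `|A⁻¹ e₀| = 1 / |y₀|`. In a basis
adapted to `n`, `‖A‖² ≤ N'² + y₀²` with `N'` independent of `y₀`, and the event forces
`|y₀| ≤ N' / √(κ² - 1)`. -/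
lemma core_zero (k : ℕ) (κ : ℝ) (hκ : 1 < κ) :
    gm (Fin (k+1)) (Fin (k+1)) {A | (Matrix.of A).det ≠ 0 ∧
        κ < l2OpNorm (Matrix.of A) * en ((Matrix.of A)⁻¹ *ᵥ Pi.single 0 1)}
      ≤ ENNReal.ofReal (√(2 / Real.pi) / √(κ ^ 2 - 1)) *
        ∫⁻ A, ENNReal.ofReal (l2OpNorm (Matrix.of A)) ∂gm (Fin (k+1)) (Fin (k+1)) := by
  have hNm : Measurable fun A : Fin (k+1) → Fin (k+1) → ℝ => l2OpNorm (Matrix.of A) :=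
    continuous_on_norm.measurable
  have hs : 0 < √(κ ^ 2 - 1) := Real.sqrt_pos.mpr (by nlinarith)
  set s := √(κ ^ 2 - 1) with hs_def
  have hs2 : s ^ 2 = κ ^ 2 - 1 := Real.sq_sqrt (by nlinarith)
  set S : Set (Fin (k+1) → Fin (k+1) → ℝ) := {A | (Matrix.of A).det ≠ 0 ∧
        κ < l2OpNorm (Matrix.of A) * en ((Matrix.of A)⁻¹ *ᵥ Pi.single 0 1)} with hS_def
  have hS : MeasurableSet S := measurableSet_core _ _
  rw [← lintegral_indicator_one hS, lintegral_cons _ _ _ (measurable_one.indicator hS),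
    lintegral_cons _ _ _ (by fun_prop), ← lintegral_const_mul']
  swap
  · exact ENNReal.ofReal_ne_top
  refine lintegral_mono fun R => ?_
  obtain ⟨n, hn, hRn⟩ := exists_normal R
  obtain ⟨Q, hQ, hQn⟩ := exists_rot 0 n hn
  have hQt : Qᵀ * Qᵀ.transpose = 1 := by
    rw [Matrix.transpose_transpose]; exact mul_eq_one_comm.mp hQ
  have hmp := mp_rot Qᵀ hQt
  have hcm := measurable_cons_left R
  rw [← hmp.lintegral_comp (f := fun a => S.indicator 1 (Fin.cons a R))
      ((measurable_one.indicator hS).comp hcm),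
    ← hmp.lintegral_comp (f := fun a => ENNReal.ofReal (l2OpNorm (Matrix.of (Fin.cons a R))))
      (hNm.comp hcm).ennreal_ofReal]
  let T : Fin k → Fin (k+1) → ℝ := fun i => Q *ᵥ R i
  -- rotating the rows of the matrix turns the first row into `y` and kills the rest of the first column
  have hB : ∀ y : Fin (k+1) → ℝ,
      Matrix.of (Fin.cons (Qᵀ *ᵥ y) R : Fin (k+1) → Fin (k+1) → ℝ) * Qᵀ
        = Matrix.of (Fin.cons y T : Fin (k+1) → Fin (k+1) → ℝ) := by
    intro y
    ext i j
    rw [Matrix.mul_apply]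
    refine Fin.cases ?_ (fun i => ?_) i
    · simp only [Matrix.of_apply, Fin.cons_zero, Matrix.transpose_apply]
      have : (Q *ᵥ (Qᵀ *ᵥ y)) j = y j := by
        rw [Matrix.mulVec_mulVec, hQ, Matrix.one_mulVec]
      rw [← this]
      simp only [Matrix.mulVec, dotProduct, mul_comm]
    · simp only [Matrix.of_apply, Fin.cons_succ, Matrix.transpose_apply, T, Matrix.mulVec,
        dotProduct, mul_comm]
  have hnorm : ∀ y : Fin (k+1) → ℝ,
      l2OpNorm (Matrix.of (Fin.cons (Qᵀ *ᵥ y) R : Fin (k+1) → Fin (k+1) → ℝ))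
        = l2OpNorm (Matrix.of (Fin.cons y T : Fin (k+1) → Fin (k+1) → ℝ)) := by
    intro y
    rw [← hB, on_mul_orth _ _ hQt]
  have hT0 : ∀ i, T i 0 = 0 := by
    intro i
    have : Q 0 ⬝ᵥ R i = 0 := by rw [hQn, dotProduct_comm]; exact hRn i
    exact this
  simp only [hnorm]
  refine le_trans ?_ (core_slab T s hs)
  have hsub : ∀ y : Fin (k+1) → ℝ,
      (Fin.cons (Qᵀ *ᵥ y) R : Fin (k+1) → Fin (k+1) → ℝ) ∈ S →
      |y 0| ≤ l2OpNorm (Matrix.of (Fin.cons y T : Fin (k+1) → Fin (k+1) → ℝ) * colZero) / s := by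
    rintro y ⟨hdet, hlt⟩
    set A := Matrix.of (Fin.cons (Qᵀ *ᵥ y) R : Fin (k+1) → Fin (k+1) → ℝ) with hA
    have hAn : A *ᵥ n = y 0 • Pi.single 0 1 := by
      funext i
      refine Fin.cases ?_ (fun i => ?_) i
      · have h1 : (A *ᵥ n) 0 = (Qᵀ *ᵥ y) ⬝ᵥ n := rfl
        have h2 : (Q *ᵥ (Qᵀ *ᵥ y)) 0 = y 0 := by
          rw [Matrix.mulVec_mulVec, hQ, Matrix.one_mulVec]
        have h3 : (Q *ᵥ (Qᵀ *ᵥ y)) 0 = Q 0 ⬝ᵥ (Qᵀ *ᵥ y) := rfl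
        rw [h1, dotProduct_comm, ← hQn, ← h3, h2]
        simp
      · have h1 : (A *ᵥ n) i.succ = R i ⬝ᵥ n := rfl
        rw [h1, hRn]
        simp
    have hinv : |y 0| * en (A⁻¹ *ᵥ Pi.single 0 1) = 1 := by
      rw [← en_smul, ← Matrix.mulVec_smul, ← hAn, Matrix.mulVec_mulVec,
        Matrix.nonsing_inv_mul _ (isUnit_iff_ne_zero.mpr hdet), Matrix.one_mulVec]
      rw [← sq_eq_sq₀ (en_nonneg n) zero_le_one, en_sq, hn, one_pow]
    have hy0 : 0 < |y 0| := by
      rcases (abs_nonneg (y 0)).eq_or_lt with h | h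
      · rw [← h, zero_mul] at hinv; norm_num at hinv
      · exact h
    have h1 : κ * |y 0| ≤ l2OpNorm A := by
      calc κ * |y 0| ≤ (l2OpNorm A * en (A⁻¹ *ᵥ Pi.single 0 1)) * |y 0| := by gcongr
        _ = l2OpNorm A * (|y 0| * en (A⁻¹ *ᵥ Pi.single 0 1)) := by ring
        _ = _ := by rw [hinv, mul_one]
    rw [hA, hnorm] at h1
    have h2 := on_sq_le (Matrix.of (Fin.cons y T : Fin (k+1) → Fin (k+1) → ℝ)) hT0
    have h3 : (κ * |y 0|) ^ 2 ≤ _ := (pow_le_pow_left₀ (by positivity) h1 2).trans h2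
    have h4 : Matrix.of (Fin.cons y T : Fin (k+1) → Fin (k+1) → ℝ) 0 0 = y 0 := rfl
    rw [h4, mul_pow, sq_abs] at h3
    rw [le_div_iff₀ hs]
    refine le_of_sq_le_sq ?_ (on_nonneg _)
    rw [mul_pow, sq_abs, hs2]
    linarith
  refine le_trans (lintegral_mono (g := Set.indicator {y : Fin (k+1) → ℝ | |y 0| ≤
    l2OpNorm (Matrix.of (Fin.cons y T : Fin (k+1) → Fin (k+1) → ℝ) * colZero) / s} 1)
    fun y => ?_) (lintegral_indicator_one_le _)
  by_cases hy : (Fin.cons (Qᵀ *ᵥ y) R : Fin (k+1) → Fin (k+1) → ℝ) ∈ S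
  · have hyU : y ∈ {y : Fin (k+1) → ℝ | |y 0| ≤
        l2OpNorm (Matrix.of (Fin.cons y T : Fin (k+1) → Fin (k+1) → ℝ) * colZero) / s} :=
      hsub y hy
    rw [Set.indicator_of_mem hy, Set.indicator_of_mem hyU]
    simp
  · rw [Set.indicator_of_notMem hy]; exact zero_le

/-- The estimate for `e₀`, transported to an arbitrary fixed vector `u` by left multiplication with an
orthogonal matrix. -/
lemma core (k : ℕ) (u : Fin (k+1) → ℝ) (τ : ℝ) (hu : en u < τ) :
    gm (Fin (k+1)) (Fin (k+1)) {A | (Matrix.of A).det ≠ 0 ∧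
        τ < l2OpNorm (Matrix.of A) * en ((Matrix.of A)⁻¹ *ᵥ u)}
      ≤ ENNReal.ofReal (√(2 / Real.pi) * en u / √(τ ^ 2 - en u ^ 2)) *
        ∫⁻ A, ENNReal.ofReal (l2OpNorm (Matrix.of A)) ∂gm (Fin (k+1)) (Fin (k+1)) := by
  rcases eq_or_ne u 0 with rfl | hu0
  · have h0 : en (0 : Fin (k+1) → ℝ) = 0 := by simp [en]
    have : {A : Fin (k+1) → Fin (k+1) → ℝ | (Matrix.of A).det ≠ 0 ∧
        τ < l2OpNorm (Matrix.of A) * en ((Matrix.of A)⁻¹ *ᵥ 0)} = ∅ := by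
      ext A
      rw [h0] at hu
      simp [h0, hu.le]
    rw [this, measure_empty]
    exact zero_le
  have hup := en_pos hu0
  have hn : ((en u)⁻¹ • u) ⬝ᵥ ((en u)⁻¹ • u) = 1 := by
    rw [← en_sq, en_smul, abs_of_pos (inv_pos.mpr hup), inv_mul_cancel₀ hup.ne', one_pow]
  obtain ⟨Q, hQ, hQn⟩ := exists_rot 0 _ hn
  have hκ : 1 < τ / en u := (one_lt_div hup).mpr hu
  have hmp : MeasurePreserving (fun (A : Fin (k+1) → Fin (k+1) → ℝ) i j =>
      (Q * Matrix.of A) i j) (gm (Fin (k+1)) (Fin (k+1))) (gm (Fin (k+1)) (Fin (k+1))) :=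
    (mp_transpose _ _).comp ((mp_rows _ (mp_rot Q hQ)).comp (mp_transpose _ _))
  have hc := core_zero k _ hκ
  have hcst : √(2 / Real.pi) / √((τ / en u) ^ 2 - 1)
      = √(2 / Real.pi) * en u / √(τ ^ 2 - en u ^ 2) := by
    have : (τ / en u) ^ 2 - 1 = (τ ^ 2 - en u ^ 2) / en u ^ 2 := by field_simp
    rw [this, Real.sqrt_div' _ (sq_nonneg _), Real.sqrt_sq hup.le]
    field_simp
  rw [hcst] at hc
  refine le_trans (le_of_eq ?_) hc
  refine Eq.trans ?_ (hmp.measure_preimage (measurableSet_core _ _).nullMeasurableSet)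
  · congr 1
    ext A
    have h1 : Matrix.of (fun i j => (Q * Matrix.of A) i j) = Q * Matrix.of A := rfl
    have hQdet : Q.det ≠ 0 := by
      intro h
      have := congrArg Matrix.det hQ
      rw [Matrix.det_mul, h, zero_mul, Matrix.det_one] at this
      exact zero_ne_one this
    have hQinv : Q⁻¹ = Qᵀ := Matrix.inv_eq_right_inv hQ
    have hQe : Qᵀ *ᵥ Pi.single 0 1 = (en u)⁻¹ • u := by
      rw [← hQn]; funext i; simp
    simp only [Set.mem_ofPred_eq, Set.mem_preimage, h1, Matrix.det_mul, on_orth_mul _ _ hQ,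
      Matrix.mul_inv_rev, hQinv, ← Matrix.mulVec_mulVec, hQe, Matrix.mulVec_smul, en_smul,
      abs_of_pos (inv_pos.mpr hup)]
    rw [div_lt_iff₀ hup]
    refine and_congr (by simp [hQdet]) ?_
    rw [show l2OpNorm (Matrix.of A) * ((en u)⁻¹ * en ((Matrix.of A)⁻¹ *ᵥ u)) * en u
      = l2OpNorm (Matrix.of A) * en ((Matrix.of A)⁻¹ *ᵥ u) by field_simp]

end Core

/-! ### The tail of the condition number of a square Gaussian matrix -/

section Combination

open scoped Matrix

lemma exp_neg_le (y : ℝ) (hy : 0 ≤ y) : Real.exp (-y) ≤ 1 - y + y ^ 2 / 2 := by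
  have h := Real.quadratic_le_exp_of_nonneg hy
  have hp : 0 ≤ 1 - y + y ^ 2 / 2 := by nlinarith [sq_nonneg (y - 1)]
  have h1 : 1 ≤ (1 - y + y ^ 2 / 2) * Real.exp y := by
    calc (1:ℝ) ≤ (1 - y + y ^ 2 / 2) * (1 + y + y ^ 2 / 2) := by nlinarith [sq_nonneg (y ^ 2)]
      _ ≤ _ := by gcongr
  rw [Real.exp_neg, inv_eq_one_div, div_le_iff₀ (Real.exp_pos y)]
  exact h1

lemma sqrt_two_pi : (2.50659:ℝ) ≤ √(2 * Real.pi) := by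
  refine Real.le_sqrt_of_sq_le ?_
  have := Real.pi_gt_d4
  norm_num at this ⊢
  linarith

/-- `P(|g| ≤ 3/4) ≤ 0.5471`, from `exp (-y) ≤ 1 - y + y² / 2`. -/
lemma central_mass : gaussianReal 0 1 {a | |a| ≤ 3 / 4} ≤ ENNReal.ofReal 0.5471 := by
  have hs : {a : ℝ | |a| ≤ 3 / 4} = Set.Icc (-(3 / 4)) (3 / 4) := by ext a; simp [abs_le]
  rw [hs, gaussianReal_apply _ one_ne_zero]
  have h2 := sqrt_two_pi
  calc ∫⁻ x in Set.Icc (-(3 / 4 : ℝ)) (3 / 4), gaussianPDF 0 1 x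
      ≤ ∫⁻ x in Set.Icc (-(3 / 4 : ℝ)) (3 / 4),
          ENNReal.ofReal ((√(2 * Real.pi))⁻¹ * (1 - x ^ 2 / 2 + x ^ 4 / 8)) := by
        refine lintegral_mono fun x => ?_
        rw [gaussianPDF, gauss_density_zero]
        refine ENNReal.ofReal_le_ofReal (mul_le_mul_of_nonneg_left ?_ (by positivity))
        have := exp_neg_le (x ^ 2 / 2) (by positivity)
        rw [show -(1 / 2) * x ^ 2 = -(x ^ 2 / 2) by ring]
        refine this.trans (le_of_eq (by ring))
    _ = ENNReal.ofReal (∫ x in Set.Icc (-(3 / 4 : ℝ)) (3 / 4),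
          (√(2 * Real.pi))⁻¹ * (1 - x ^ 2 / 2 + x ^ 4 / 8)) := by
        rw [ofReal_integral_eq_lintegral_ofReal]
        · exact (Continuous.integrableOn_Icc (by fun_prop))
        · refine Filter.Eventually.of_forall fun x => mul_nonneg (by positivity) ?_
          nlinarith [sq_nonneg (x ^ 2 - 2)]
    _ ≤ _ := by
        refine ENNReal.ofReal_le_ofReal ?_
        rw [integral_const_mul, integral_Icc_eq_integral_Ioc,
          ← intervalIntegral.integral_of_le (by norm_num)]
        have hI : ∫ x in (-(3 / 4 : ℝ))..(3 / 4), (1 - x ^ 2 / 2 + x ^ 4 / 8)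
            = 2 * (3 / 4 - (3 / 4) ^ 3 / 6 + (3 / 4) ^ 5 / 40) := by
          rw [intervalIntegral.integral_add, intervalIntegral.integral_sub]
          · simp only [intervalIntegral.integral_div, integral_pow,
              intervalIntegral.integral_const, smul_eq_mul]
            norm_num
          all_goals exact Continuous.intervalIntegrable (by fun_prop) _ _
        rw [hI, inv_mul_le_iff₀ (by positivity)]
        norm_num at h2 ⊢
        linarith

lemma tail_small (m : ℕ) (hm : 3 ≤ m) (L : ℝ) (hL : 2.4 * m ≤ L) :
    √3 ^ m * Real.exp (-(L ^ 2 / 3)) ≤ 0.001 := by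
  have hm3 : (3:ℝ) ≤ m := by exact_mod_cast hm
  have h3 : √(3:ℝ) ≤ 2 := Real.sqrt_le_iff.mpr ⟨by norm_num, by norm_num⟩
  have hL2 : (m:ℝ) * 5 ≤ L ^ 2 / 3 := by
    have : (2.4 * (m:ℝ)) ^ 2 ≤ L ^ 2 := by gcongr
    norm_num at this ⊢
    nlinarith
  have he : Real.exp (-5) ≤ 1 / 20 := by
    rw [Real.exp_neg, inv_eq_one_div, one_div_le_one_div (Real.exp_pos _) (by norm_num)]
    have h1 := Real.exp_one_gt_d9
    have h2 : Real.exp 5 = Real.exp 1 ^ 5 := by rw [← Real.exp_nat_mul]; norm_num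
    rw [h2]
    calc (20:ℝ) ≤ 2 ^ 5 := by norm_num
      _ ≤ _ := by gcongr; linarith
  calc √3 ^ m * Real.exp (-(L ^ 2 / 3)) ≤ 2 ^ m * Real.exp (m * (-5)) := by
        gcongr
        linarith
    _ = (2 * Real.exp (-5)) ^ m := by rw [Real.exp_nat_mul, mul_pow]
    _ ≤ (1 / 10) ^ m := by gcongr; linarith
    _ ≤ (1 / 10) ^ 3 := pow_le_pow_of_le_one (by norm_num) (by norm_num) hm
    _ = 0.001 := by norm_num

/-- If `‖A‖ ‖A⁻¹‖ > s`, a Gaussian vector `u` is, with probability at least `0.45`, not too long and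
at least `3/4` away from the hyperplane orthogonal to the top right singular vector of `A⁻¹`; such a
`u` satisfies `‖A‖ |A⁻¹ u| > 3 s / 4`. -/
lemma good_directions {k : ℕ} (hk : 3 ≤ k + 1) (s : ℝ) (hs : 16 * ((k + 1 : ℕ) : ℝ) ≤ s)
    (A : Fin (k+1) → Fin (k+1) → ℝ)
    (hlt : s < l2OpNorm (Matrix.of A) * l2OpNorm (Matrix.of A)⁻¹) :
    ENNReal.ofReal 0.45 ≤ gv (Fin (k+1)) {u | en u ≤ 3 / 20 * s ∧
      3 / 4 * s < l2OpNorm (Matrix.of A) * en ((Matrix.of A)⁻¹ *ᵥ u)} := by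
  obtain ⟨z, hz, hzA⟩ := exists_lower (Matrix.of A)⁻¹
  have hs0 : 0 ≤ s := le_trans (by positivity) hs
  have hcov : (Set.univ : Set (Fin (k+1) → ℝ)) ⊆ {u | en u ≤ 3 / 20 * s ∧
      3 / 4 * s < l2OpNorm (Matrix.of A) * en ((Matrix.of A)⁻¹ *ᵥ u)} ∪
      ((fun u => z ⬝ᵥ u) ⁻¹' {a | |a| ≤ 3 / 4} ∪ {u | 3 / 20 * s < en u}) := by
    intro u _
    by_cases h1 : 3 / 20 * s < en u
    · exact Or.inr (Or.inr h1)
    by_cases h2 : |z ⬝ᵥ u| ≤ 3 / 4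
    · exact Or.inr (Or.inl h2)
    refine Or.inl ⟨not_lt.mp h1, ?_⟩
    push Not at h2
    have hN := on_nonneg (Matrix.of A)
    have hpos : 0 < l2OpNorm (Matrix.of A) * l2OpNorm (Matrix.of A)⁻¹ := hs0.trans_lt hlt
    calc 3 / 4 * s < 3 / 4 * (l2OpNorm (Matrix.of A) * l2OpNorm (Matrix.of A)⁻¹) := by gcongr
      _ ≤ |z ⬝ᵥ u| * (l2OpNorm (Matrix.of A) * l2OpNorm (Matrix.of A)⁻¹) := by gcongr
      _ = l2OpNorm (Matrix.of A) * (l2OpNorm (Matrix.of A)⁻¹ * |z ⬝ᵥ u|) := by ring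
      _ ≤ _ := by gcongr; exact hzA u
  have h1 := (measure_mono (μ := gv (Fin (k+1))) hcov).trans ((measure_union_le _ _).trans
    (add_le_add_right (measure_union_le _ _) _))
  have hms : MeasurableSet {a : ℝ | |a| ≤ 3 / 4} := measurableSet_le measurable_norm measurable_const
  have ht := en_tail (ι := Fin (k+1)) (3 / 20 * s) (by positivity)
  rw [Fintype.card_fin] at ht
  have htail := ht.trans (ENNReal.ofReal_le_ofReal
    (tail_small (k+1) hk (3 / 20 * s) (by norm_num at hs ⊢; linarith)))
  rw [measure_univ, (mp_dot z hz).measure_preimage hms.nullMeasurableSet] at h1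
  have h2 := h1.trans (add_le_add_right (add_le_add central_mass htail) _)
  rw [← ENNReal.ofReal_add (by norm_num) (by norm_num)] at h2
  have h3 := tsub_le_iff_right.mpr h2
  refine le_trans ?_ h3
  rw [← ENNReal.ofReal_one, ← ENNReal.ofReal_sub _ (by norm_num)]
  exact ENNReal.ofReal_le_ofReal (by norm_num)

/-- Fubini on pairs `(A, u)` with `u` an independent Gaussian vector, `good_directions` being used for
fixed `A` and `core` for fixed `u`. The resulting constant is
`√(2/π) · 3 / (√(24/25) · 0.45) < 5.5`. -/
lemma bad_measure {k : ℕ} (hk : 3 ≤ k + 1) (t : ℝ) (ht : 16 ≤ t) :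
    gm (Fin (k+1)) (Fin (k+1)) {A | (Matrix.of A).det ≠ 0 ∧
      ((k + 1 : ℕ) : ℝ) * t < l2OpNorm (Matrix.of A) * l2OpNorm (Matrix.of A)⁻¹}
      ≤ ENNReal.ofReal (5.5 / t) := by
  set m : ℝ := ((k + 1 : ℕ) : ℝ) with hm
  have hm0 : 0 < m := by positivity
  set s : ℝ := m * t with hs
  have hs0 : 0 < s := by positivity
  have hNm : Measurable fun A : Fin (k+1) → Fin (k+1) → ℝ => l2OpNorm (Matrix.of A) :=
    continuous_on_norm.measurable
  set Bad : Set (Fin (k+1) → Fin (k+1) → ℝ) := {A | (Matrix.of A).det ≠ 0 ∧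
      s < l2OpNorm (Matrix.of A) * l2OpNorm (Matrix.of A)⁻¹} with hBad
  have hBadm : MeasurableSet Bad :=
    (measurable_det (measurableSet_singleton 0)).compl.inter
      (measurableSet_lt measurable_const (hNm.mul measurable_norm_inv))
  set D : Set ((Fin (k+1) → Fin (k+1) → ℝ) × (Fin (k+1) → ℝ)) := {p | en p.2 ≤ 3 / 20 * s ∧
    (Matrix.of p.1).det ≠ 0 ∧
    3 / 4 * s < l2OpNorm (Matrix.of p.1) * en ((Matrix.of p.1)⁻¹ *ᵥ p.2)} with hD
  have hDm : MeasurableSet D := by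
    have h1 : MeasurableSet {p : (Fin (k+1) → Fin (k+1) → ℝ) × (Fin (k+1) → ℝ) |
        en p.2 ≤ 3 / 20 * s} :=
      measurableSet_le (measurable_en.comp measurable_snd) measurable_const
    have hfst : Measurable
        (Prod.fst : (Fin (k+1) → Fin (k+1) → ℝ) × (Fin (k+1) → ℝ) → _) := measurable_fst
    have h2 := ((measurable_det (ι := Fin (k+1))).comp hfst (measurableSet_singleton 0)).compl
    have h3 := (hNm.comp hfst).mul
      (measurable_en_inv (ι := Fin (k+1)))
    exact h1.inter (h2.inter (measurableSet_lt measurable_const h3))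
  set E := ∫⁻ A, ENNReal.ofReal (l2OpNorm (Matrix.of A)) ∂gm (Fin (k+1)) (Fin (k+1)) with hE
  have hEle : E ≤ ENNReal.ofReal (9 / 4 * √m) := norm_mean (k+1) (by omega)
  set r : ℝ := √(24 / 25) * (3 / 4 * s) with hr
  have hr0 : 0 < r := by positivity
  have hslice : ∀ u : Fin (k+1) → ℝ, gm (Fin (k+1)) (Fin (k+1)) ((fun A => (A, u)) ⁻¹' D)
      ≤ ENNReal.ofReal (√(2 / Real.pi) / r) * E * ENNReal.ofReal (en u) := by
    intro u
    by_cases hu : en u ≤ 3 / 20 * s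
    -- `(3/20)² = (1 - 24/25) (3/4)²`, so the square root in `core` is at least `r`
    · have hsub : (fun A => (A, u)) ⁻¹' D ⊆ {A : Fin (k+1) → Fin (k+1) → ℝ |
          (Matrix.of A).det ≠ 0 ∧
          3 / 4 * s < l2OpNorm (Matrix.of A) * en ((Matrix.of A)⁻¹ *ᵥ u)} := fun A hA => hA.2
      refine (measure_mono hsub).trans ((core k u (3 / 4 * s) (by linarith)).trans ?_)
      rw [mul_right_comm, ← ENNReal.ofReal_mul (by positivity)]
      have hu0 := en_nonneg u
      rw [show √(2 / Real.pi) / r * en u = √(2 / Real.pi) * en u / r by ring]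
      refine mul_le_mul_left (ENNReal.ofReal_le_ofReal ?_) _
      refine div_le_div_of_nonneg_left (by positivity) hr0 ?_
      refine Real.le_sqrt_of_sq_le ?_
      rw [hr, mul_pow, Real.sq_sqrt (by norm_num)]
      have : en u ^ 2 ≤ (3 / 20 * s) ^ 2 := by gcongr
      nlinarith
    · have : (fun A => (A, u)) ⁻¹' D = ∅ := by
        ext A
        simp only [Set.mem_preimage, Set.mem_empty_iff_false, iff_false]
        exact fun h => hu h.1
      rw [this, measure_empty]; exact zero_le
  have hmain : ENNReal.ofReal 0.45 * gm (Fin (k+1)) (Fin (k+1)) Bad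
      ≤ ENNReal.ofReal (√(2 / Real.pi) / r) * E * ENNReal.ofReal (√m) := by
    calc ENNReal.ofReal 0.45 * gm (Fin (k+1)) (Fin (k+1)) Bad
        = ∫⁻ A, Bad.indicator (fun _ => ENNReal.ofReal 0.45) A ∂gm (Fin (k+1)) (Fin (k+1)) := by
          rw [lintegral_indicator_const hBadm]
      _ ≤ ∫⁻ A, gv (Fin (k+1)) (Prod.mk A ⁻¹' D) ∂gm (Fin (k+1)) (Fin (k+1)) := by
          refine lintegral_mono fun A => ?_
          by_cases hA : A ∈ Bad
          · rw [Set.indicator_of_mem hA]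
            have hst : 16 * m ≤ s := by rw [hs]; nlinarith
            refine (good_directions hk s hst A hA.2).trans (measure_mono fun u hu => ?_)
            exact ⟨hu.1, hA.1, hu.2⟩
          · rw [Set.indicator_of_notMem hA]; exact zero_le
      _ = ∫⁻ u, gm (Fin (k+1)) (Fin (k+1)) ((fun A => (A, u)) ⁻¹' D) ∂gv (Fin (k+1)) := by
          rw [← Measure.prod_apply hDm, ← Measure.prod_apply_symm hDm]
      _ ≤ ∫⁻ u, ENNReal.ofReal (√(2 / Real.pi) / r) * E * ENNReal.ofReal (en u)
            ∂gv (Fin (k+1)) := lintegral_mono hslice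
      _ = ENNReal.ofReal (√(2 / Real.pi) / r) * E * ∫⁻ u, ENNReal.ofReal (en u)
            ∂gv (Fin (k+1)) := lintegral_const_mul _ measurable_en.ennreal_ofReal
      _ ≤ _ := by
          gcongr
          exact en_mean (k+1) (by omega)
  have hmain2 : ENNReal.ofReal 0.45 * gm (Fin (k+1)) (Fin (k+1)) Bad
      ≤ ENNReal.ofReal (√(2 / Real.pi) / r * (9 / 4 * √m) * √m) := by
    rw [ENNReal.ofReal_mul (by positivity), ENNReal.ofReal_mul (by positivity)]
    refine hmain.trans ?_
    gcongr
  rw [mul_comm, ← ENNReal.le_div_iff_mul_le (Or.inl (by norm_num)) (Or.inl ENNReal.ofReal_ne_top),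
    ← ENNReal.ofReal_div_of_pos (by norm_num)] at hmain2
  refine hmain2.trans (ENNReal.ofReal_le_ofReal ?_)
  have hpi : √(2 / Real.pi) ≤ 0.7979 := by
    refine Real.sqrt_le_iff.mpr ⟨by norm_num, ?_⟩
    rw [div_le_iff₀ Real.pi_pos]
    have := Real.pi_gt_d4
    norm_num at this ⊢
    linarith
  have h24 : (0.9797:ℝ) ≤ √(24 / 25) := Real.le_sqrt_of_sq_le (by norm_num)
  have hmm : √m * √m = m := Real.mul_self_sqrt hm0.le
  have ht0 : 0 < t := by linarith
  have hval : √(2 / Real.pi) / r * (9 / 4 * √m) * √m / 0.45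
      = (√(2 / Real.pi) * 3 / (√(24 / 25) * 0.45)) / t := by
    rw [hr, hs]
    rw [show √(2 / Real.pi) / (√(24 / 25) * (3 / 4 * (m * t))) * (9 / 4 * √m) * √m
      = √(2 / Real.pi) / (√(24 / 25) * (3 / 4 * (m * t))) * (9 / 4 * (√m * √m)) by ring, hmm]
    field_simp
    ring
  rw [hval]
  refine div_le_div_of_nonneg_right ?_ ht0.le
  rw [div_le_iff₀ (by positivity)]
  norm_num at hpi h24 ⊢
  linarith

lemma single_matrix {m : ℕ} (hm : 3 ≤ m) (t : ℝ) (ht : 16 ≤ t) :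
    gm (Fin m) (Fin m) {A | ¬ IsUnit (Matrix.of A).det ∨
      (m : ℝ) * t < l2OpNorm (Matrix.of A) * l2OpNorm (Matrix.of A)⁻¹}
      ≤ ENNReal.ofReal (5.5 / t) := by
  obtain ⟨k, rfl⟩ : ∃ k, m = k + 1 := ⟨m - 1, by omega⟩
  have hsub : {A : Fin (k+1) → Fin (k+1) → ℝ | ¬ IsUnit (Matrix.of A).det ∨
      ((k + 1 : ℕ) : ℝ) * t < l2OpNorm (Matrix.of A) * l2OpNorm (Matrix.of A)⁻¹}
      ⊆ {A | (Matrix.of A).det = 0} ∪ {A | (Matrix.of A).det ≠ 0 ∧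
      ((k + 1 : ℕ) : ℝ) * t < l2OpNorm (Matrix.of A) * l2OpNorm (Matrix.of A)⁻¹} := by
    intro A hA
    by_cases h : (Matrix.of A).det = 0
    · exact Or.inl h
    · refine Or.inr ⟨h, hA.resolve_left ?_⟩
      rw [not_not]
      exact isUnit_iff_ne_zero.mpr h
  refine (measure_mono hsub).trans ((measure_union_le _ _).trans ?_)
  rw [det_null, zero_add]
  exact bad_measure hm t ht

end Combination

/-! ### The union bound over submatrices -/

/-- For an `m × P` matrix (`3 ≤ m ≤ P`) with i.i.d. standard Gaussian entries, the
probability that some `m × m` column-submatrix is singular or has condition number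
`κ₂ > m · P^{2(P-m)}` is strictly less than `5.6 / P^{P-m}`. -/
theorem stmt_16 (m P : ℕ) (hm : 3 ≤ m) (hmP : m ≤ P)
    (μ : Measure ((Fin m × Fin P) → ℝ))
    (hμ : μ = Measure.pi fun _ : Fin m × Fin P => gaussianReal 0 1) :
    μ {ω | ∃ S : Finset (Fin P), ∃ hS : S.card = m,
        ¬ IsUnit (Matrix.of fun i j : Fin m => ω (i, (S.orderIsoOfFin hS j : Fin P))).det ∨
          (m : ℝ) * (P : ℝ) ^ (2 * (P - m)) <
            l2OpNorm (Matrix.of fun i j : Fin m => ω (i, (S.orderIsoOfFin hS j : Fin P))) *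
              l2OpNorm (Matrix.of fun i j : Fin m => ω (i, (S.orderIsoOfFin hS j : Fin P)))⁻¹} <
      ENNReal.ofReal (5.6 / (P : ℝ) ^ (P - m)) := by
  subst hμ
  rcases hmP.eq_or_lt with rfl | hlt
  -- for `P = m` the right-hand side is `5.6`, larger than any probability
  · rw [Nat.sub_self, pow_zero, div_one]
    refine lt_of_le_of_lt prob_le_one ?_
    rw [← ENNReal.ofReal_one]
    exact (ENNReal.ofReal_lt_ofReal_iff (by norm_num)).mpr (by norm_num)
  have hP0 : (0:ℝ) < P := by
    have : 0 < P := by omega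
    exact_mod_cast this
  have hP4 : (4:ℝ) ≤ P := by
    have : 4 ≤ P := by omega
    exact_mod_cast this
  have ht : (16:ℝ) ≤ (P:ℝ) ^ (2 * (P - m)) := by
    calc (16:ℝ) ≤ (P:ℝ) ^ 2 := by nlinarith
      _ ≤ _ := pow_le_pow_right₀ (by linarith) (by omega)
  have hpd : (0:ℝ) < (P:ℝ) ^ (P - m) := by positivity
  let B : Set (Fin m → Fin m → ℝ) := {A | ¬ IsUnit (Matrix.of A).det ∨
      (m : ℝ) * (P:ℝ) ^ (2 * (P - m)) < l2OpNorm (Matrix.of A) * l2OpNorm (Matrix.of A)⁻¹}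
  have hB : MeasurableSet B := by
    have h1 : MeasurableSet {A : Fin m → Fin m → ℝ | ¬ IsUnit (Matrix.of A).det} := by
      simp only [isUnit_iff_ne_zero, not_not]
      exact measurable_det (measurableSet_singleton 0)
    have h2 : Measurable fun A : Fin m → Fin m → ℝ => l2OpNorm (Matrix.of A) :=
      continuous_on_norm.measurable
    exact h1.union (measurableSet_lt measurable_const (h2.mul measurable_norm_inv))
  let F : {S : Finset (Fin P) // S.card = m} → Set ((Fin m × Fin P) → ℝ) := fun S =>
    (fun (ω : Fin m × Fin P → ℝ) (i j : Fin m) => ω (i, (S.1.orderIsoOfFin S.2 j : Fin P))) ⁻¹' B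
  have hF : ∀ S, gv (Fin m × Fin P) (F S) ≤ ENNReal.ofReal (5.5 / (P:ℝ) ^ (2 * (P - m))) := by
    intro S
    have hinj : Function.Injective fun j : Fin m => (S.1.orderIsoOfFin S.2 j : Fin P) :=
      Subtype.val_injective.comp (S.1.orderIsoOfFin S.2).injective
    exact ((mp_sub (ι := Fin m) _ hinj).measure_preimage hB.nullMeasurableSet).trans_le
      (single_matrix hm _ ht)
  have hcard : (Fintype.card {S : Finset (Fin P) // S.card = m} : ℝ) ≤ (P:ℝ) ^ (P - m) := by
    have h1 : Fintype.card {S : Finset (Fin P) // S.card = m} = P.choose m := by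
      simp
    rw [h1, ← Nat.choose_symm hmP]
    exact_mod_cast Nat.choose_le_pow P (P - m)
  calc _ ≤ gv (Fin m × Fin P) (⋃ S, F S) := by
        refine measure_mono ?_
        rintro ω ⟨S, hS, h⟩
        exact Set.mem_iUnion.mpr ⟨⟨S, hS⟩, h⟩
    _ ≤ ∑ S, gv (Fin m × Fin P) (F S) := measure_iUnion_fintype_le _ _
    _ ≤ ∑ _S : {S : Finset (Fin P) // S.card = m},
          ENNReal.ofReal (5.5 / (P:ℝ) ^ (2 * (P - m))) := Finset.sum_le_sum fun S _ => hF S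
    _ = ENNReal.ofReal (Fintype.card {S : Finset (Fin P) // S.card = m} *
          (5.5 / (P:ℝ) ^ (2 * (P - m)))) := by
        rw [Finset.sum_const, Finset.card_univ, nsmul_eq_mul, ENNReal.ofReal_mul (by positivity),
          ENNReal.ofReal_natCast]
    _ ≤ ENNReal.ofReal (5.5 / (P:ℝ) ^ (P - m)) := by
        refine ENNReal.ofReal_le_ofReal ?_
        calc _ ≤ (P:ℝ) ^ (P - m) * (5.5 / (P:ℝ) ^ (2 * (P - m))) := by gcongr
          _ = _ := by rw [two_mul, pow_add]; field_simp
    _ < _ := by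
        refine (ENNReal.ofReal_lt_ofReal_iff (by positivity)).mpr ?_
        exact div_lt_div_of_pos_right (by norm_num) hpd
end
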